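/- (Theorem 21) Let 0 < θ₁ < 1, 0 ≤ θ < 1, 0 < q₁, r₁, r ≤ ∞, a, a₁, b₁ ∈ SV, and ‖s^{-1/r₁} b₁(s)/a₁(s)‖_{r₁,(0,1)} < ∞; if θ = 0 assume additionally ‖s^{-1/r} a(s)‖_{r,(1,∞)} < ∞. Put c₁(t) = a₁(t) ‖s^{-1/r₁} b₁(s)/a₁(s)‖_{r₁,(0,t)} and ρ(t) = t^{θ₁}/c₁(t). Then (A₀, Ā^𝓡_{θ₁,r₁,b₁,q₁,a₁})_{θ,r;a} ≅ Ā_{η,r;a^#}, where η = θθ₁ and a^#(t) = c₁(t)^θ a(ρ(t)). -/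

import Mathlib

open MeasureTheory Set ENNReal Filter

noncomputable section

/-- The `L_q` quasi-norm (with respect to Lebesgue measure) of an `ℝ≥0∞`-valued
function over a set of reals; for `q = ∞` it is the essential supremum. -/
def LqNorm (q : ℝ≥0∞) (s : Set ℝ) (g : ℝ → ℝ≥0∞) : ℝ≥0∞ :=
  if q = ∞ then essSup g (volume.restrict s)
  else (∫⁻ t in s, g t ^ q.toReal) ^ q⁻¹.toReal

/-- The weight `s ↦ s ^ (-1/r) * b s`, as an `ℝ≥0∞`-valued function
(`1/∞ = 0` by convention). -/
def svWgt (r : ℝ≥0∞) (b : ℝ → ℝ) : ℝ → ℝ≥0∞ :=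
  fun s => ENNReal.ofReal (s ^ (-(r⁻¹.toReal)) * b s)

/-- `f` and `g` are equivalent on `s`: each is bounded by a constant multiple
of the other there. -/
def EquivOn (s : Set ℝ) (f g : ℝ → ℝ) : Prop :=
  ∃ C : ℝ, 0 < C ∧ ∀ t ∈ s, C⁻¹ * g t ≤ f t ∧ f t ≤ C * g t

/-- A positive measurable function `b` on `(0,∞)` is slowly varying if for every
`ε > 0`, `t ^ ε * b t` is equivalent to a non-decreasing function and
`t ^ (-ε) * b t` is equivalent to a non-increasing function. -/
def SlowlyVarying (b : ℝ → ℝ) : Prop :=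
  AEMeasurable b (volume.restrict (Ioi 0)) ∧ (∀ t ∈ Ioi (0:ℝ), 0 < b t) ∧
    ∀ ε : ℝ, 0 < ε →
      (∃ g : ℝ → ℝ, MonotoneOn g (Ioi 0) ∧ EquivOn (Ioi 0) (fun t => t ^ ε * b t) g) ∧
      (∃ g : ℝ → ℝ, AntitoneOn g (Ioi 0) ∧ EquivOn (Ioi 0) (fun t => t ^ (-ε) * b t) g)

/-- A quasi-Banach space continuously embedded into the ambient (Hausdorff) space `E`,
recorded via its extended-real-valued quasi-norm; the space itself is the set of
vectors of finite quasi-norm. -/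
structure QuasiBanach (E : Type*) [AddCommGroup E] [Module ℝ E] where
  N : E → ℝ≥0∞
  zero : N 0 = 0
  definite : ∀ x, N x = 0 → x = 0
  smul : ∀ (c : ℝ) (x : E), N (c • x) = ENNReal.ofReal |c| * N x
  quasi : ∃ C : ℝ≥0∞, 1 ≤ C ∧ C ≠ ∞ ∧ ∀ x y, N (x + y) ≤ C * (N x + N y)
  complete : ∀ f : ℕ → E,
    (∀ ε : ℝ≥0∞, 0 < ε → ∃ M : ℕ, ∀ m ≥ M, ∀ n ≥ M, N (f m - f n) < ε) →
    (∀ n, N (f n) ≠ ∞) →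
    ∃ g : E, N g ≠ ∞ ∧ Tendsto (fun n => N (f n - g)) atTop (nhds 0)

variable {E : Type*} [AddCommGroup E] [Module ℝ E]

/-- The Peetre K-functional of the couple whose quasi-norms are `N₀`, `N₁`. -/
def Kf (N₀ N₁ : E → ℝ≥0∞) (t : ℝ) (f : E) : ℝ≥0∞ :=
  ⨅ g : E, N₀ g + ENNReal.ofReal t * N₁ (f - g)

/-- The quasi-norm of the real interpolation space `Ā_{θ,q;b}`. -/
def normK (N₀ N₁ : E → ℝ≥0∞) (θ : ℝ) (q : ℝ≥0∞) (b : ℝ → ℝ) (f : E) : ℝ≥0∞ :=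
  LqNorm q (Ioi 0) fun u =>
    ENNReal.ofReal (u ^ (-θ - q⁻¹.toReal) * b u) * Kf N₀ N₁ u f

/-- The quasi-norm of the limiting interpolation space `Ā^𝓛_{σ,r,b,q,a}`. -/
def normL (N₀ N₁ : E → ℝ≥0∞) (σ : ℝ) (r q : ℝ≥0∞) (b a : ℝ → ℝ) (f : E) : ℝ≥0∞ :=
  LqNorm r (Ioi 0) fun t =>
    ENNReal.ofReal (t ^ (-(r⁻¹.toReal)) * (b t / a t)) *
      LqNorm q (Ioo 0 t) fun u =>
        ENNReal.ofReal (u ^ (-σ - q⁻¹.toReal) * a u) * Kf N₀ N₁ u f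

/-- The quasi-norm of the limiting interpolation space `Ā^𝓡_{σ,r,b,q,a}`. -/
def normR (N₀ N₁ : E → ℝ≥0∞) (σ : ℝ) (r q : ℝ≥0∞) (b a : ℝ → ℝ) (f : E) : ℝ≥0∞ :=
  LqNorm r (Ioi 0) fun t =>
    ENNReal.ofReal (t ^ (-(r⁻¹.toReal)) * (b t / a t)) *
      LqNorm q (Ioi t) fun u =>
        ENNReal.ofReal (u ^ (-σ - q⁻¹.toReal) * a u) * Kf N₀ N₁ u f

/-- Two (extended-real-valued) quasi-norms define the same space with
equivalent quasi-norms. -/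
def EquivNorms (nX nY : E → ℝ≥0∞) : Prop :=
  ∃ C : ℝ≥0∞, 0 < C ∧ C ≠ ∞ ∧ ∀ f : E, C⁻¹ * nY f ≤ nX f ∧ nX f ≤ C * nY f
theorem LqNorm_mono {q : ℝ≥0∞} {S : Set ℝ} (hS : MeasurableSet S) {g h : ℝ → ℝ≥0∞}
    (H : ∀ t ∈ S, g t ≤ h t) : LqNorm q S g ≤ LqNorm q S h := by
  unfold LqNorm
  split_ifs with hq
  · exact essSup_mono_ae (ae_restrict_of_forall_mem hS H)
  · refine ENNReal.rpow_le_rpow ?_ ENNReal.toReal_nonneg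
    exact setLIntegral_mono' hS fun t ht => ENNReal.rpow_le_rpow (H t ht) ENNReal.toReal_nonneg

theorem LqNorm_mono_set {q : ℝ≥0∞} {S T : Set ℝ} (hST : S ⊆ T) (g : ℝ → ℝ≥0∞) :
    LqNorm q S g ≤ LqNorm q T g := by
  unfold LqNorm
  split_ifs with hq
  · exact essSup_mono_measure (Measure.absolutelyContinuous_of_le (Measure.restrict_mono hST le_rfl))
  · exact ENNReal.rpow_le_rpow (lintegral_mono_set hST) ENNReal.toReal_nonneg

theorem toReal_mul_inv {q : ℝ≥0∞} (hq0 : 0 < q) (hq : q ≠ ∞) : q.toReal * q⁻¹.toReal = 1 := by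
  rw [ENNReal.toReal_inv]
  exact mul_inv_cancel₀ (ENNReal.toReal_pos hq0.ne' hq).ne'

theorem LqNorm_const_mul {q : ℝ≥0∞} (hq0 : 0 < q) (S : Set ℝ) (g : ℝ → ℝ≥0∞) {c : ℝ≥0∞}
    (hc : c ≠ ∞) : LqNorm q S (fun t => c * g t) = c * LqNorm q S g := by
  unfold LqNorm
  split_ifs with hq
  · exact ENNReal.essSup_const_mul
  · have h1 : ∀ t, (c * g t) ^ q.toReal = c ^ q.toReal * g t ^ q.toReal := fun t =>
      ENNReal.mul_rpow_of_nonneg _ _ ENNReal.toReal_nonneg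
    simp_rw [h1]
    rw [lintegral_const_mul' _ _ (ENNReal.rpow_ne_top_of_nonneg ENNReal.toReal_nonneg hc),
      ENNReal.mul_rpow_of_nonneg _ _ ENNReal.toReal_nonneg, ← ENNReal.rpow_mul,
      toReal_mul_inv hq0 hq, ENNReal.rpow_one]

theorem LqNorm_union (q : ℝ≥0∞) : ∃ C : ℝ≥0∞, C ≠ ∞ ∧ ∀ (S T : Set ℝ) (g : ℝ → ℝ≥0∞),
    LqNorm q (S ∪ T) g ≤ C * (LqNorm q S g + LqNorm q T g) := by
  by_cases hq : q = ∞
  · refine ⟨1, by simp, fun S T g => ?_⟩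
    simp only [LqNorm, if_pos hq, one_mul]
    refine essSup_le_of_ae_le _ ?_
    have : ∀ᵐ x ∂(volume.restrict (S ∪ T)), g x ≤ essSup g (volume.restrict S) + essSup g (volume.restrict T) := by
      rw [ae_restrict_union_iff]
      refine ⟨?_, ?_⟩
      · filter_upwards [ENNReal.ae_le_essSup (μ := volume.restrict S) g] with x hx
        exact hx.trans le_self_add
      · filter_upwards [ENNReal.ae_le_essSup (μ := volume.restrict T) g] with x hx
        exact hx.trans le_add_self
    exact this
  · refine ⟨2 ^ q⁻¹.toReal, ENNReal.rpow_ne_top_of_nonneg ENNReal.toReal_nonneg (by simp),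
      fun S T g => ?_⟩
    simp only [LqNorm, if_neg hq]
    set p := q⁻¹.toReal
    have hp : 0 ≤ p := ENNReal.toReal_nonneg
    set x := ∫⁻ t in S, g t ^ q.toReal
    set y := ∫⁻ t in T, g t ^ q.toReal
    calc _ ≤ (x + y) ^ p := ENNReal.rpow_le_rpow (lintegral_union_le _ _ _) hp
      _ ≤ (2 * max x y) ^ p := by
        refine ENNReal.rpow_le_rpow ?_ hp
        rw [two_mul]; exact add_le_add (le_max_left _ _) (le_max_right _ _)
      _ = 2 ^ p * (max x y) ^ p := ENNReal.mul_rpow_of_nonneg _ _ hp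
      _ ≤ _ := by
        gcongr
        rcases le_total x y with h | h
        · rw [max_eq_right h]; exact le_add_self
        · rw [max_eq_left h]; exact le_self_add

theorem pow_wgt {q ε u : ℝ} (hu : 0 < u) (hq : 0 < q) :
    ENNReal.ofReal (u ^ (-q⁻¹) * u ^ ε) ^ q = ENNReal.ofReal (u ^ (-1 + ε * q)) := by
  rw [ENNReal.ofReal_rpow_of_nonneg (by positivity) hq.le, ← Real.rpow_add hu, ← Real.rpow_mul hu.le]
  congr 2; field_simp

theorem L4 {q : ℝ≥0∞} (hq0 : 0 < q) {ε : ℝ} (hε : 0 < ε) : ∃ C : ℝ≥0∞, C ≠ ∞ ∧ ∀ s : ℝ, 0 < s →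
    LqNorm q (Ioi s) (fun u => ENNReal.ofReal (u ^ (-(q⁻¹.toReal)) * u ^ (-ε)))
      ≤ C * ENNReal.ofReal (s ^ (-ε)) := by
  by_cases hq : q = ∞
  · refine ⟨1, by simp, fun s hs => ?_⟩
    simp only [LqNorm, if_pos hq, one_mul]
    refine essSup_le_of_ae_le _ (ae_restrict_of_forall_mem measurableSet_Ioi fun u hu => ?_)
    simp only [hq, ENNReal.inv_top, ENNReal.toReal_zero, neg_zero, Real.rpow_zero, one_mul]
    exact ENNReal.ofReal_le_ofReal (Real.rpow_le_rpow_of_nonpos hs (le_of_lt hu) (by linarith))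
  · have hqp := ENNReal.toReal_pos hq0.ne' hq
    set p := q.toReal with hp
    refine ⟨(ENNReal.ofReal ((ε * p)⁻¹)) ^ q⁻¹.toReal, ENNReal.rpow_ne_top_of_nonneg ENNReal.toReal_nonneg (by simp), fun s hs => ?_⟩
    simp only [LqNorm, if_neg hq]
    have e1 : ∫⁻ u in Ioi s, ENNReal.ofReal (u ^ (-(q⁻¹.toReal)) * u ^ (-ε)) ^ p
        = ENNReal.ofReal ((ε * p)⁻¹) * ENNReal.ofReal (s ^ (-ε)) ^ p := by
      rw [setLIntegral_congr_fun measurableSet_Ioi (g := fun u => ENNReal.ofReal (u ^ (-1 + (-ε) * p)))]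
      · have hlt : -1 + (-ε) * p < -1 := by nlinarith
        rw [← ofReal_integral_eq_lintegral_ofReal (integrableOn_Ioi_rpow_of_lt hlt hs)
          (ae_restrict_of_forall_mem measurableSet_Ioi fun u hu =>
            Real.rpow_nonneg (hs.trans hu).le _), integral_Ioi_rpow_of_lt hlt hs,
          ENNReal.ofReal_rpow_of_nonneg (by positivity) hqp.le, ← ENNReal.ofReal_mul (by positivity),
          ← Real.rpow_mul hs.le]
        congr 1
        rw [show -1 + -ε * p + 1 = -ε * p by ring]
        field_simp
      · intro u hu
        simp only [ENNReal.toReal_inv]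
        exact pow_wgt (hs.trans hu) hqp
    rw [e1, ENNReal.mul_rpow_of_nonneg _ _ ENNReal.toReal_nonneg, ← ENNReal.rpow_mul,
      toReal_mul_inv hq0 hq, ENNReal.rpow_one]

theorem L5 {q : ℝ≥0∞} (hq0 : 0 < q) {ε : ℝ} (hε : 0 < ε) : ∃ C : ℝ≥0∞, C ≠ ∞ ∧ ∀ t : ℝ, 0 < t →
    LqNorm q (Ioo 0 t) (fun u => ENNReal.ofReal (u ^ (-(q⁻¹.toReal)) * u ^ ε))
      ≤ C * ENNReal.ofReal (t ^ ε) := by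
  by_cases hq : q = ∞
  · refine ⟨1, by simp, fun s hs => ?_⟩
    simp only [LqNorm, if_pos hq, one_mul]
    refine essSup_le_of_ae_le _ (ae_restrict_of_forall_mem measurableSet_Ioo fun u hu => ?_)
    simp only [hq, ENNReal.inv_top, ENNReal.toReal_zero, neg_zero, Real.rpow_zero, one_mul]
    exact ENNReal.ofReal_le_ofReal (Real.rpow_le_rpow hu.1.le hu.2.le hε.le)
  · have hqp := ENNReal.toReal_pos hq0.ne' hq
    set p := q.toReal with hp
    refine ⟨(ENNReal.ofReal ((ε * p)⁻¹)) ^ q⁻¹.toReal, ENNReal.rpow_ne_top_of_nonneg ENNReal.toReal_nonneg (by simp), fun s hs => ?_⟩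
    simp only [LqNorm, if_neg hq]
    have e1 : ∫⁻ u in Ioo 0 s, ENNReal.ofReal (u ^ (-(q⁻¹.toReal)) * u ^ ε) ^ p
        = ENNReal.ofReal ((ε * p)⁻¹) * ENNReal.ofReal (s ^ ε) ^ p := by
      rw [setLIntegral_congr_fun measurableSet_Ioo (g := fun u => ENNReal.ofReal (u ^ (-1 + ε * p)))]
      · have hlt : -1 < -1 + ε * p := by nlinarith [mul_pos hε hqp]
        have h_integ : IntervalIntegrable (fun x : ℝ => x ^ (-1 + ε * p)) volume 0 s :=
          intervalIntegral.intervalIntegrable_rpow' hlt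
        rw [intervalIntegrable_iff_integrableOn_Ioo_of_le hs.le] at h_integ
        rw [← ofReal_integral_eq_lintegral_ofReal h_integ
          (ae_restrict_of_forall_mem measurableSet_Ioo fun u hu =>
            Real.rpow_nonneg hu.1.le _), ← integral_Ioc_eq_integral_Ioo,
            ← intervalIntegral.integral_of_le hs.le, integral_rpow (Or.inl hlt),
          ENNReal.ofReal_rpow_of_nonneg (by positivity) hqp.le, ← ENNReal.ofReal_mul (by positivity),
          ← Real.rpow_mul hs.le]
        congr 1
        rw [show -1 + ε * p + 1 = ε * p by ring, Real.zero_rpow (by positivity)]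
        field_simp
        ring
      · intro u hu
        simp only [ENNReal.toReal_inv]
        exact pow_wgt hu.1 hqp
    rw [e1, ENNReal.mul_rpow_of_nonneg _ _ ENNReal.toReal_nonneg, ← ENNReal.rpow_mul,
      toReal_mul_inv hq0 hq, ENNReal.rpow_one]

theorem LqNorm_one_lb {q : ℝ≥0∞} (hq0 : 0 < q) {t : ℝ} (ht : 0 < t) :
    ENNReal.ofReal t ^ q⁻¹.toReal ≤ LqNorm q (Ioo t (2 * t)) (fun _ => 1) := by
  unfold LqNorm
  split_ifs with hq
  · simp only [hq, ENNReal.inv_top, ENNReal.toReal_zero, ENNReal.rpow_zero]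
    rw [essSup_const]
    intro h
    rw [Measure.restrict_eq_zero, Real.volume_Ioo, ENNReal.ofReal_eq_zero] at h
    linarith
  · simp only [ENNReal.one_rpow, lintegral_one, Measure.restrict_apply_univ, Real.volume_Ioo]
    rw [show 2 * t - t = t by ring]

theorem L6 {q : ℝ≥0∞} (hq0 : 0 < q) : ∃ c : ℝ≥0∞, c ≠ 0 ∧ c ≠ ∞ ∧ ∀ t : ℝ, 0 < t →
    c ≤ LqNorm q (Ioo t (2 * t)) (fun u => ENNReal.ofReal (u ^ (-(q⁻¹.toReal)))) := by
  set p := q⁻¹.toReal with hp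
  have hp0 : 0 ≤ p := ENNReal.toReal_nonneg
  refine ⟨ENNReal.ofReal ((2:ℝ) ^ (-p)), ?_, by simp, fun t ht => ?_⟩
  · simp only [ne_eq, ENNReal.ofReal_eq_zero, not_le]; positivity
  calc ENNReal.ofReal ((2:ℝ) ^ (-p)) = ENNReal.ofReal ((2 * t) ^ (-p)) * ENNReal.ofReal t ^ p := by
        rw [ENNReal.ofReal_rpow_of_pos ht, ← ENNReal.ofReal_mul (by positivity),
          Real.mul_rpow (by norm_num) ht.le, mul_assoc, ← Real.rpow_add ht]
        simp
    _ ≤ ENNReal.ofReal ((2 * t) ^ (-p)) * LqNorm q (Ioo t (2 * t)) (fun _ => 1) := by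
        gcongr; exact LqNorm_one_lb hq0 ht
    _ = LqNorm q (Ioo t (2 * t)) (fun _ => ENNReal.ofReal ((2 * t) ^ (-p)) * 1) :=
        (LqNorm_const_mul hq0 _ _ (by simp)).symm
    _ ≤ _ := by
        refine LqNorm_mono measurableSet_Ioo fun u hu => ?_
        rw [mul_one]
        exact ENNReal.ofReal_le_ofReal
          (Real.rpow_le_rpow_of_nonpos (ht.trans hu.1) hu.2.le (by linarith))

theorem Kf_mono (N₀ N₁ : E → ℝ≥0∞) {s t : ℝ} (h : s ≤ t) (f : E) :
    Kf N₀ N₁ s f ≤ Kf N₀ N₁ t f := by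
  unfold Kf
  gcongr

theorem Kf_scale (N₀ N₁ : E → ℝ≥0∞) {s t : ℝ} (l : ℝ) (hl : 1 ≤ l) (h : t ≤ l * s) (f : E) :
    Kf N₀ N₁ t f ≤ ENNReal.ofReal l * Kf N₀ N₁ s f := by
  refine (Kf_mono N₀ N₁ h f).trans ?_
  unfold Kf
  rw [ENNReal.mul_iInf_of_ne (by simp; linarith) (by simp)]
  refine iInf_mono fun g => ?_
  rw [mul_add, ENNReal.ofReal_mul (by linarith), mul_assoc]
  gcongr
  calc N₀ g = 1 * N₀ g := (one_mul _).symm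
    _ ≤ _ := by gcongr; simpa using hl

theorem Kf_quasi (N₀ N₁ : E → ℝ≥0∞) {C : ℝ≥0∞} (h1 : 1 ≤ C) (hC : C ≠ ∞)
    (hq : ∀ x y, N₀ (x + y) ≤ C * (N₀ x + N₀ y)) (t : ℝ) (f g : E) :
    Kf N₀ N₁ t f ≤ C * (N₀ g + Kf N₀ N₁ t (f - g)) := by
  unfold Kf
  rw [ENNReal.add_iInf, ENNReal.mul_iInf_of_ne (by positivity) hC]
  refine le_iInf fun h => (iInf_le _ (g + h)).trans ?_
  rw [show f - (g + h) = f - g - h by abel, ← add_assoc, mul_add C (N₀ g + N₀ h)]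
  refine add_le_add (hq _ _) ?_
  calc _ = 1 * (ENNReal.ofReal t * N₁ (f - g - h)) := (one_mul _).symm
    _ ≤ _ := by gcongr

theorem sv_bound {b : ℝ → ℝ} (hb : SlowlyVarying b) {ε : ℝ} (hε : 0 < ε) :
    ∃ C : ℝ, 1 ≤ C ∧ ∀ s t : ℝ, 0 < s → s ≤ t →
      b s ≤ C * (t / s) ^ ε * b t ∧ b t ≤ C * (t / s) ^ ε * b s := by
  obtain ⟨-, hpos, H⟩ := hb
  obtain ⟨⟨g, hg, C, hC, hgC⟩, ⟨k, hk, D, hD, hkD⟩⟩ := H ε hε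
  have key1 : ∀ s t : ℝ, 0 < s → s ≤ t → b s ≤ C ^ 2 * (t / s) ^ ε * b t := by
    intro s t hs hst
    have ht := hs.trans_le hst
    have h1 := (hgC s hs).2
    have h2 := (hgC t ht).1
    have h3 := hg (mem_Ioi.2 hs) (mem_Ioi.2 ht) hst
    simp only at h1 h2
    have h4 : g t ≤ C * (t ^ ε * b t) := by
      rwa [inv_mul_le_iff₀ hC] at h2
    have hsp : 0 < s ^ ε := by positivity
    rw [Real.div_rpow ht.le hs.le]
    have : s ^ ε * b s ≤ C * (C * (t ^ ε * b t)) := by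
      refine h1.trans ?_
      gcongr; exact h3.trans h4
    have e : C ^ 2 * (t ^ ε / s ^ ε) * b t = (C * (C * (t ^ ε * b t))) / s ^ ε := by
      field_simp
    rw [e, le_div_iff₀ hsp]; linarith
  have key2 : ∀ s t : ℝ, 0 < s → s ≤ t → b t ≤ D ^ 2 * (t / s) ^ ε * b s := by
    intro s t hs hst
    have ht := hs.trans_le hst
    have h1 := (hkD t ht).2
    have h2 := (hkD s hs).1
    have h3 := hk (mem_Ioi.2 hs) (mem_Ioi.2 ht) hst
    simp only [Real.rpow_neg hs.le, Real.rpow_neg ht.le] at h1 h2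
    have h4 : k s ≤ D * ((s ^ ε)⁻¹ * b s) := by
      rwa [inv_mul_le_iff₀ hD] at h2
    have hsp : 0 < s ^ ε := by positivity
    have htp : 0 < t ^ ε := by positivity
    rw [Real.div_rpow ht.le hs.le]
    have : (t ^ ε)⁻¹ * b t ≤ D * (D * ((s ^ ε)⁻¹ * b s)) := by
      refine h1.trans ?_
      gcongr; exact h3.trans h4
    rw [inv_mul_le_iff₀ htp] at this
    refine this.trans_eq ?_
    field_simp
  refine ⟨max 1 (max (C ^ 2) (D ^ 2)), le_max_left _ _, fun s t hs hst => ⟨?_, ?_⟩⟩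
  · refine (key1 s t hs hst).trans ?_
    have := (hpos t (hs.trans_le hst)).le
    have ht := hs.trans_le hst
    gcongr
    exact (le_max_left _ _).trans (le_max_right _ _)
  · refine (key2 s t hs hst).trans ?_
    have := (hpos s hs).le
    have ht := hs.trans_le hst
    gcongr
    exact (le_max_right _ _).trans (le_max_right _ _)

/-- discrete norm -/
noncomputable def dn (r : ℝ≥0∞) (x : ℤ → ℝ≥0∞) : ℝ≥0∞ :=
  if r = ∞ then ⨆ k, x k else (∑' k, x k ^ r.toReal) ^ r⁻¹.toReal

theorem dn_const_mul {r : ℝ≥0∞} (hr : 0 < r) (x : ℤ → ℝ≥0∞) (c : ℝ≥0∞) :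
    dn r (fun k => c * x k) = c * dn r x := by
  unfold dn
  split_ifs with h
  · rw [ENNReal.mul_iSup]
  · simp_rw [ENNReal.mul_rpow_of_nonneg _ _ (ENNReal.toReal_nonneg (a := r))]
    rw [ENNReal.tsum_mul_left, ENNReal.mul_rpow_of_nonneg _ _ ENNReal.toReal_nonneg,
      ← ENNReal.rpow_mul, toReal_mul_inv hr h, ENNReal.rpow_one]

theorem dn_mono {r : ℝ≥0∞} {x y : ℤ → ℝ≥0∞} (h : ∀ k, x k ≤ y k) : dn r x ≤ dn r y := by
  unfold dn
  split_ifs with hr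
  · exact iSup_mono h
  · exact ENNReal.rpow_le_rpow (ENNReal.tsum_le_tsum fun k =>
      ENNReal.rpow_le_rpow (h k) ENNReal.toReal_nonneg) ENNReal.toReal_nonneg

theorem summable_geo_abs {δ : ℝ} (hδ : 0 < δ) :
    (∑' m : ℤ, ENNReal.ofReal ((2:ℝ) ^ (-δ * |(m:ℝ)|))) ≠ ∞ := by
  have hs : Summable (fun m : ℤ => (2:ℝ) ^ (-δ * |(m:ℝ)|)) := by
    have hg : Summable (fun n : ℕ => ((2:ℝ) ^ (-δ)) ^ n) :=
      summable_geometric_of_lt_one (by positivity)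
        (Real.rpow_lt_one_of_one_lt_of_neg (by norm_num) (by linarith))
    refine Summable.of_nat_of_neg (hg.congr fun n => ?_) (hg.congr fun n => ?_)
    · rw [← Real.rpow_natCast, ← Real.rpow_mul (by norm_num)]; simp
    · rw [← Real.rpow_natCast, ← Real.rpow_mul (by norm_num)]; simp
  exact hs.tsum_ofReal_ne_top

theorem schur {r : ℝ≥0∞} (hr : 0 < r) {ε : ℝ} (hε : 0 < ε) (κ : ℤ → ℤ) :
    ∃ M : ℝ≥0∞, M ≠ ∞ ∧ ∀ x y : ℤ → ℝ≥0∞,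
      (∀ k, x k ≤ ⨆ i, ENNReal.ofReal ((2:ℝ) ^ (-ε * |((k - κ i : ℤ):ℝ)|)) * y i) →
      dn r x ≤ M * dn r y := by
  by_cases h : r = ∞
  · refine ⟨1, by simp, fun x y H => ?_⟩
    simp only [dn, if_pos h, one_mul]
    refine iSup_le fun k => (H k).trans (iSup_mono fun i => ?_)
    refine mul_le_of_le_one_left zero_le ?_
    rw [ENNReal.ofReal_le_one]
    refine Real.rpow_le_one_of_one_le_of_nonpos (by norm_num) ?_
    have := abs_nonneg ((k - κ i : ℤ):ℝ)
    nlinarith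
  · have hp := ENNReal.toReal_pos hr.ne' h
    set p := r.toReal with hpdef
    set T := (∑' m : ℤ, ENNReal.ofReal ((2:ℝ) ^ (-(ε * p) * |(m:ℝ)|))) with hT
    have hTf : T ≠ ∞ := summable_geo_abs (by positivity)
    refine ⟨T ^ r⁻¹.toReal, ENNReal.rpow_ne_top_of_nonneg ENNReal.toReal_nonneg hTf, fun x y H => ?_⟩
    simp only [dn, if_neg h]
    rw [← ENNReal.mul_rpow_of_nonneg _ _ ENNReal.toReal_nonneg]
    refine ENNReal.rpow_le_rpow ?_ ENNReal.toReal_nonneg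
    have hterm : ∀ k, x k ^ p ≤ ∑' i, ENNReal.ofReal ((2:ℝ) ^ (-(ε * p) * |((k - κ i : ℤ):ℝ)|)) * y i ^ p := by
      intro k
      have h1 := ENNReal.rpow_le_rpow (H k) hp.le
      refine h1.trans ?_
      rw [← ENNReal.orderIsoRpow_apply p hp, OrderIso.map_iSup]
      refine iSup_le fun i => ?_
      rw [ENNReal.orderIsoRpow_apply, ENNReal.mul_rpow_of_nonneg _ _ hp.le,
        ENNReal.ofReal_rpow_of_pos (by positivity), ← Real.rpow_mul (by norm_num)]
      refine le_trans (le_of_eq ?_) (ENNReal.le_tsum i)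
      congr 3; ring
    calc ∑' k, x k ^ p ≤ ∑' k, ∑' i, ENNReal.ofReal ((2:ℝ) ^ (-(ε * p) * |((k - κ i : ℤ):ℝ)|)) * y i ^ p :=
          ENNReal.tsum_le_tsum hterm
      _ = ∑' i, ∑' k, ENNReal.ofReal ((2:ℝ) ^ (-(ε * p) * |((k - κ i : ℤ):ℝ)|)) * y i ^ p :=
          ENNReal.tsum_comm
      _ = ∑' i, T * y i ^ p := by
          refine tsum_congr fun i => ?_
          rw [ENNReal.tsum_mul_right]
          congr 1
          exact (Equiv.subRight (κ i)).tsum_eq (fun m : ℤ => ENNReal.ofReal ((2:ℝ) ^ (-(ε * p) * |(m:ℝ)|)))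
      _ = T * ∑' i, y i ^ p := ENNReal.tsum_mul_left

theorem iUnion_dyadic : (⋃ k : ℤ, Ico ((2:ℝ) ^ k) ((2:ℝ) ^ (k + 1))) = Ioi 0 := by
  ext x
  simp only [mem_iUnion, mem_Ioi]
  constructor
  · rintro ⟨k, hk⟩
    exact lt_of_lt_of_le (by positivity) hk.1
  · intro hx
    exact exists_mem_Ico_zpow hx (by norm_num)

theorem disjoint_dyadic : Pairwise (Function.onFun Disjoint fun k : ℤ => Ico ((2:ℝ) ^ k) ((2:ℝ) ^ (k + 1))) := by
  intro i j hij
  refine Set.disjoint_left.2 fun x hx hy => hij ?_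
  have h1 : (2:ℝ) ^ i < 2 ^ (j + 1) := hx.1.trans_lt hy.2
  have h2 : (2:ℝ) ^ j < 2 ^ (i + 1) := hy.1.trans_lt hx.2
  have h1' := (zpow_lt_zpow_iff_right₀ (by norm_num : (1:ℝ) < 2)).1 h1
  have h2' := (zpow_lt_zpow_iff_right₀ (by norm_num : (1:ℝ) < 2)).1 h2
  omega

theorem discr {r : ℝ≥0∞} (hr : 0 < r) {D : ℝ≥0∞} (hD : D ≠ ∞) (F : ℝ → ℝ≥0∞)
    (hF : ∀ s t : ℝ, 0 < s → s ≤ t → t ≤ 2 * s → F s ≤ D * F t ∧ F t ≤ D * F s) :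
    LqNorm r (Ioi 0) (fun u => ENNReal.ofReal (u ^ (-(r⁻¹.toReal))) * F u)
        ≤ D * dn r (fun k => F (2 ^ k)) ∧
      dn r (fun k => F (2 ^ k)) ≤ 2 ^ r⁻¹.toReal * D *
        LqNorm r (Ioi 0) (fun u => ENNReal.ofReal (u ^ (-(r⁻¹.toReal))) * F u) := by
  have hI : ∀ k : ℤ, ∀ u ∈ Ico ((2:ℝ) ^ k) ((2:ℝ) ^ (k + 1)), F (2 ^ k) ≤ D * F u ∧ F u ≤ D * F (2 ^ k) := by
    intro k u hu
    refine hF _ _ (by positivity) hu.1 ?_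
    have := hu.2.le
    rw [zpow_add_one₀ (by norm_num)] at this
    linarith
  by_cases h : r = ∞
  · subst h
    simp only [LqNorm, dn, if_true, ENNReal.inv_top, ENNReal.toReal_zero, neg_zero,
      Real.rpow_zero, ENNReal.ofReal_one, one_mul, ENNReal.rpow_zero]
    constructor
    · refine essSup_le_of_ae_le _ (ae_restrict_of_forall_mem measurableSet_Ioi fun u hu => ?_)
      obtain ⟨k, hk⟩ := exists_mem_Ico_zpow hu (by norm_num : (1:ℝ) < 2)
      refine (hI k u hk).2.trans ?_
      exact mul_le_mul' le_rfl (le_iSup (fun k : ℤ => F (2 ^ k)) k)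
    · refine iSup_le fun k => ?_
      have h1 := ENNReal.ae_le_essSup (μ := volume.restrict (Ioi (0:ℝ))) F
      have hsub : Ico ((2:ℝ) ^ k) ((2:ℝ) ^ (k + 1)) ⊆ Ioi 0 := by
        rw [← iUnion_dyadic]; exact subset_iUnion (fun k : ℤ => Ico ((2:ℝ) ^ k) ((2:ℝ) ^ (k + 1))) k
      have h2 := ae_restrict_of_ae_restrict_of_subset hsub h1
      have h3 : ∀ᵐ x ∂(volume.restrict (Ico ((2:ℝ) ^ k) ((2:ℝ) ^ (k + 1)))), x ∈ Ico ((2:ℝ) ^ k) ((2:ℝ) ^ (k + 1)) :=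
        ae_restrict_mem measurableSet_Ico
      have : NeZero (volume.restrict (Ico ((2:ℝ) ^ k) ((2:ℝ) ^ (k + 1)))) := by
        refine ⟨fun h => ?_⟩
        rw [Measure.restrict_eq_zero, Real.volume_Ico, ENNReal.ofReal_eq_zero, zpow_add_one₀ (by norm_num)] at h
        have : (0:ℝ) < 2 ^ k := by positivity
        linarith
      obtain ⟨x, hx1, hx2⟩ := (h2.and h3).exists
      exact (hI k x hx2).1.trans (by gcongr)
  · have hp := ENNReal.toReal_pos hr.ne' h
    set p := r.toReal with hpdef
    have hrp : r⁻¹.toReal = p⁻¹ := ENNReal.toReal_inv r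
    have hw : ∀ x : ℝ, 0 < x → ENNReal.ofReal (x ^ (-p⁻¹)) ^ p = ENNReal.ofReal x⁻¹ := by
      intro x hx
      rw [ENNReal.ofReal_rpow_of_pos (by positivity), ← Real.rpow_mul hx.le, neg_mul,
        inv_mul_cancel₀ hp.ne', Real.rpow_neg_one]
    have hvol : ∀ k : ℤ, volume (Ico ((2:ℝ) ^ k) ((2:ℝ) ^ (k + 1))) = ENNReal.ofReal (2 ^ k) := by
      intro k
      rw [Real.volume_Ico, zpow_add_one₀ (by norm_num)]
      congr 1; ring
    have hdec : ∫⁻ u in Ioi 0, (ENNReal.ofReal (u ^ (-p⁻¹)) * F u) ^ p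
        = ∑' k : ℤ, ∫⁻ u in Ico ((2:ℝ) ^ k) ((2:ℝ) ^ (k + 1)), (ENNReal.ofReal (u ^ (-p⁻¹)) * F u) ^ p := by
      rw [← iUnion_dyadic, lintegral_iUnion (fun _ => measurableSet_Ico) disjoint_dyadic]
    have hup : ∀ k : ℤ, ∫⁻ u in Ico ((2:ℝ) ^ k) ((2:ℝ) ^ (k + 1)), (ENNReal.ofReal (u ^ (-p⁻¹)) * F u) ^ p
        ≤ D ^ p * F (2 ^ k) ^ p := by
      intro k
      have hk : (0:ℝ) < 2 ^ k := by positivity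
      calc _ ≤ ∫⁻ u in Ico ((2:ℝ) ^ k) ((2:ℝ) ^ (k + 1)), ENNReal.ofReal ((2 ^ k)⁻¹) * (D ^ p * F (2 ^ k) ^ p) := by
            refine setLIntegral_mono' measurableSet_Ico fun u hu => ?_
            rw [← hw _ hk, ← ENNReal.mul_rpow_of_nonneg _ _ hp.le, ← ENNReal.mul_rpow_of_nonneg _ _ hp.le]
            refine ENNReal.rpow_le_rpow (mul_le_mul' (ENNReal.ofReal_le_ofReal ?_) (hI k u hu).2) hp.le
            exact Real.rpow_le_rpow_of_nonpos hk hu.1 (by simp [hp.le])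
        _ = _ := by
            rw [setLIntegral_const, hvol, mul_comm, ← mul_assoc, ← ENNReal.ofReal_mul hk.le,
              mul_inv_cancel₀ hk.ne', ENNReal.ofReal_one, one_mul]
    have hlo : ∀ k : ℤ, F (2 ^ k) ^ p ≤ 2 * D ^ p * ∫⁻ u in Ico ((2:ℝ) ^ k) ((2:ℝ) ^ (k + 1)), (ENNReal.ofReal (u ^ (-p⁻¹)) * F u) ^ p := by
      intro k
      have hk : (0:ℝ) < 2 ^ k := by positivity
      have hk1 : (0:ℝ) < 2 ^ (k + 1) := by positivity
      have hDp : D ^ p ≠ ∞ := ENNReal.rpow_ne_top_of_nonneg hp.le hD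
      calc F (2 ^ k) ^ p = 2 * ∫⁻ u in Ico ((2:ℝ) ^ k) ((2:ℝ) ^ (k + 1)), ENNReal.ofReal ((2 ^ (k + 1))⁻¹) * F (2 ^ k) ^ p := by
            rw [setLIntegral_const, hvol, mul_comm _ (ENNReal.ofReal _), ← mul_assoc, ← mul_assoc,
              show (2:ℝ≥0∞) = ENNReal.ofReal 2 by simp, ← ENNReal.ofReal_mul (by norm_num),
              ← ENNReal.ofReal_mul (by positivity), zpow_add_one₀ (by norm_num)]
            have : (2:ℝ) * 2 ^ k * (2 ^ k * 2)⁻¹ = 1 := by field_simp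
            rw [this]; simp
        _ ≤ 2 * ∫⁻ u in Ico ((2:ℝ) ^ k) ((2:ℝ) ^ (k + 1)), D ^ p * (ENNReal.ofReal (u ^ (-p⁻¹)) * F u) ^ p := by
            gcongr 2 * ?_
            refine setLIntegral_mono' measurableSet_Ico fun u hu => ?_
            rw [← hw _ hk1, ← ENNReal.mul_rpow_of_nonneg _ _ hp.le, ← ENNReal.mul_rpow_of_nonneg _ _ hp.le]
            refine ENNReal.rpow_le_rpow ?_ hp.le
            rw [mul_left_comm]
            refine mul_le_mul' (ENNReal.ofReal_le_ofReal ?_) (hI k u hu).1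
            exact Real.rpow_le_rpow_of_nonpos (hk.trans_le hu.1) hu.2.le (by simp [hp.le])
        _ = _ := by
            rw [lintegral_const_mul' _ _ hDp, mul_assoc]
    have hp' : 0 ≤ p⁻¹ := by positivity
    have hDD : D = (D ^ p) ^ p⁻¹ := by
      rw [← ENNReal.rpow_mul, mul_inv_cancel₀ hp.ne', ENNReal.rpow_one]
    simp only [LqNorm, dn, if_neg h, hrp]
    rw [hdec]
    constructor
    · rw [hDD, ← ENNReal.mul_rpow_of_nonneg _ _ hp', ← ENNReal.tsum_mul_left]
      exact ENNReal.rpow_le_rpow (ENNReal.tsum_le_tsum hup) hp'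
    · rw [hDD, ← ENNReal.mul_rpow_of_nonneg _ _ hp', ← ENNReal.mul_rpow_of_nonneg _ _ hp', ← ENNReal.tsum_mul_left]
      exact ENNReal.rpow_le_rpow (ENNReal.tsum_le_tsum hlo) hp'

/-- quantitative slow variation -/
def SVB (b : ℝ → ℝ) : Prop := (∀ t : ℝ, 0 < t → 0 < b t) ∧ ∀ ε : ℝ, 0 < ε →
    ∃ C : ℝ, 1 ≤ C ∧ ∀ s t : ℝ, 0 < s → s ≤ t →
      b s ≤ C * (t / s) ^ ε * b t ∧ b t ≤ C * (t / s) ^ ε * b s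

theorem SVB.of {b : ℝ → ℝ} (h : SlowlyVarying b) : SVB b :=
  ⟨fun t ht => h.2.1 t ht, fun _ hε => sv_bound h hε⟩

theorem SVB.mul {b c : ℝ → ℝ} (hb : SVB b) (hc : SVB c) : SVB (fun t => b t * c t) := by
  refine ⟨fun t ht => mul_pos (hb.1 t ht) (hc.1 t ht), fun ε hε => ?_⟩
  obtain ⟨C, hC, h1⟩ := hb.2 (ε / 2) (by positivity)
  obtain ⟨D, hD, h2⟩ := hc.2 (ε / 2) (by positivity)
  refine ⟨C * D, by nlinarith, fun s t hs hst => ?_⟩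
  have ht := hs.trans_le hst
  have e : (t / s) ^ ε = (t / s) ^ (ε / 2) * (t / s) ^ (ε / 2) := by
    rw [← Real.rpow_add (by positivity)]; congr 1; ring
  have := (hb.1 s hs).le
  have := (hb.1 t ht).le
  have := (hc.1 s hs).le
  have := (hc.1 t ht).le
  rw [e]
  constructor
  · calc b s * c s ≤ (C * (t / s) ^ (ε / 2) * b t) * (D * (t / s) ^ (ε / 2) * c t) :=
          mul_le_mul (h1 s t hs hst).1 (h2 s t hs hst).1 (by assumption) (by positivity)
      _ = _ := by ring
  · calc b t * c t ≤ (C * (t / s) ^ (ε / 2) * b s) * (D * (t / s) ^ (ε / 2) * c s) :=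
          mul_le_mul (h1 s t hs hst).2 (h2 s t hs hst).2 (by assumption) (by positivity)
      _ = _ := by ring

theorem SVB.inv {b : ℝ → ℝ} (hb : SVB b) : SVB (fun t => (b t)⁻¹) := by
  refine ⟨fun t ht => inv_pos.2 (hb.1 t ht), fun ε hε => ?_⟩
  obtain ⟨C, hC, h1⟩ := hb.2 ε hε
  refine ⟨C, hC, fun s t hs hst => ?_⟩
  have ht := hs.trans_le hst
  have := hb.1 s hs
  have := hb.1 t ht
  obtain ⟨h2, h3⟩ := h1 s t hs hst
  constructor
  · beta_reduce
    rw [inv_eq_one_div, div_le_iff₀ (by assumption), mul_right_comm, ← div_eq_mul_inv, le_div_iff₀ (by assumption)]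
    linarith
  · beta_reduce
    rw [inv_eq_one_div, div_le_iff₀ (by assumption), mul_right_comm, ← div_eq_mul_inv, le_div_iff₀ (by assumption)]
    linarith

theorem B_facts {r : ℝ≥0∞} (hr : 0 < r) {β : ℝ → ℝ} (hβ : SVB β)
    (hfin : LqNorm r (Ioo 0 1) (svWgt r β) ≠ ∞) :
    (∀ t : ℝ, 0 < t → LqNorm r (Ioo 0 t) (svWgt r β) ≠ ∞) ∧
    (∃ C : ℝ, 0 < C ∧ ∀ t : ℝ, 0 < t → β t ≤ C * (LqNorm r (Ioo 0 t) (svWgt r β)).toReal) ∧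
    SVB (fun t => (LqNorm r (Ioo 0 t) (svWgt r β)).toReal) := by
  set B : ℝ → ℝ≥0∞ := fun t => LqNorm r (Ioo 0 t) (svWgt r β) with hB
  have hmono : ∀ s t, s ≤ t → B s ≤ B t := fun s t hst =>
    LqNorm_mono_set (Ioo_subset_Ioo le_rfl hst) _
  -- lower bound
  obtain ⟨D, hD, hlow⟩ : ∃ D : ℝ≥0∞, D ≠ ∞ ∧ ∀ t : ℝ, 0 < t → ENNReal.ofReal (β t) ≤ D * B t := by
    obtain ⟨c, hc0, hct, hc⟩ := L6 hr
    obtain ⟨C, hC, h1⟩ := hβ.2 1 one_pos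
    refine ⟨c⁻¹ * ENNReal.ofReal (2 * C), by finiteness, fun t ht => ?_⟩
    have h2 : c * ENNReal.ofReal (β t / (2 * C)) ≤ B t := by
      calc c * ENNReal.ofReal (β t / (2 * C)) ≤ LqNorm r (Ioo (t / 2) (2 * (t / 2))) (fun u => ENNReal.ofReal (u ^ (-(r⁻¹.toReal)))) * ENNReal.ofReal (β t / (2 * C)) := by
            gcongr; exact hc (t / 2) (by linarith)
        _ = LqNorm r (Ioo (t / 2) (2 * (t / 2))) (fun u => ENNReal.ofReal (β t / (2 * C)) * ENNReal.ofReal (u ^ (-(r⁻¹.toReal)))) := by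
            rw [LqNorm_const_mul hr _ _ (by simp), mul_comm]
        _ ≤ LqNorm r (Ioo (t / 2) (2 * (t / 2))) (svWgt r β) := by
            refine LqNorm_mono measurableSet_Ioo fun u hu => ?_
            have hu0 : 0 < u := by linarith [hu.1]
            have hut : u ≤ t := by linarith [hu.2]
            rw [← ENNReal.ofReal_mul (by have := hβ.1 t ht; positivity)]
            unfold svWgt
            refine ENNReal.ofReal_le_ofReal ?_
            rw [mul_comm]
            gcongr
            have h3 := (h1 u t hu0 hut).2
            rw [Real.rpow_one] at h3
            rw [div_le_iff₀ (by positivity)]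
            have h4 : t / u ≤ 2 := by rw [div_le_iff₀ hu0]; linarith [hu.1]
            have := hβ.1 u hu0
            calc β t ≤ C * (t / u) * β u := h3
              _ ≤ C * 2 * β u := by gcongr
              _ = _ := by ring
        _ ≤ B t := LqNorm_mono_set (Ioo_subset_Ioo (by linarith) (by linarith)) _
    calc ENNReal.ofReal (β t) = c⁻¹ * ENNReal.ofReal (2 * C) * (c * ENNReal.ofReal (β t / (2 * C))) := by
          rw [show c⁻¹ * ENNReal.ofReal (2 * C) * (c * ENNReal.ofReal (β t / (2 * C))) = (c⁻¹ * c) * (ENNReal.ofReal (2 * C) * ENNReal.ofReal (β t / (2 * C))) by ring,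
            ENNReal.inv_mul_cancel hc0 hct, one_mul, ← ENNReal.ofReal_mul (by positivity)]
          congr 1; field_simp
      _ ≤ _ := by gcongr
  -- growth
  have hgrow : ∀ ε : ℝ, 0 < ε → ∃ G : ℝ≥0∞, G ≠ ∞ ∧ ∀ s t : ℝ, 0 < s → s ≤ t →
      B t ≤ G * ENNReal.ofReal ((t / s) ^ ε) * B s := by
    intro ε hε
    obtain ⟨U, hU, hun⟩ := LqNorm_union r
    obtain ⟨C5, hC5, h5⟩ := L5 hr hε
    obtain ⟨C, hC, h1⟩ := hβ.2 ε hε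
    refine ⟨U * (1 + C5 * ENNReal.ofReal C * D), by finiteness, fun s t hs hst => ?_⟩
    have ht := hs.trans_le hst
    have hsub : Ioo 0 t ⊆ Ioo 0 s ∪ Ico s t := by
      intro u hu
      rcases lt_or_ge u s with h | h
      · exact Or.inl ⟨hu.1, h⟩
      · exact Or.inr ⟨h, hu.2⟩
    have hβs := hβ.1 s hs
    have hsec : LqNorm r (Ico s t) (svWgt r β) ≤ C5 * ENNReal.ofReal C * ENNReal.ofReal ((t / s) ^ ε) * ENNReal.ofReal (β s) := by
      calc LqNorm r (Ico s t) (svWgt r β) ≤ LqNorm r (Ico s t) (fun u => ENNReal.ofReal (C * s ^ (-ε) * β s) * ENNReal.ofReal (u ^ (-(r⁻¹.toReal)) * u ^ ε)) := by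
            refine LqNorm_mono measurableSet_Ico fun u hu => ?_
            have hu0 : 0 < u := hs.trans_le hu.1
            unfold svWgt
            rw [← ENNReal.ofReal_mul (by positivity)]
            refine ENNReal.ofReal_le_ofReal ?_
            calc u ^ (-r⁻¹.toReal) * β u ≤ u ^ (-r⁻¹.toReal) * (C * (u / s) ^ ε * β s) := by
                  gcongr; exact (h1 s u hs hu.1).2
              _ = _ := by
                  rw [Real.div_rpow hu0.le hs.le, Real.rpow_neg hs.le]; ring
        _ ≤ ENNReal.ofReal (C * s ^ (-ε) * β s) * LqNorm r (Ioo 0 t) (fun u => ENNReal.ofReal (u ^ (-(r⁻¹.toReal)) * u ^ ε)) := by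
            rw [LqNorm_const_mul hr _ _ (by simp)]
            gcongr
            exact LqNorm_mono_set (show Ico s t ⊆ Ioo 0 t from fun u hu => ⟨hs.trans_le hu.1, hu.2⟩) _
        _ ≤ ENNReal.ofReal (C * s ^ (-ε) * β s) * (C5 * ENNReal.ofReal (t ^ ε)) := by
            gcongr; exact h5 t ht
        _ = _ := by
            have e : C * s ^ (-ε) * β s * t ^ ε = C * ((t / s) ^ ε * β s) := by
              rw [Real.div_rpow ht.le hs.le, Real.rpow_neg hs.le]; ring
            rw [mul_left_comm, ← ENNReal.ofReal_mul (by positivity), e, ENNReal.ofReal_mul (by positivity),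
              ENNReal.ofReal_mul (by positivity)]
            ring
    have hone : 1 ≤ ENNReal.ofReal ((t / s) ^ ε) := by
      rw [ENNReal.one_le_ofReal]
      exact Real.one_le_rpow ((one_le_div hs).2 hst) hε.le
    calc B t ≤ LqNorm r (Ioo 0 s ∪ Ico s t) (svWgt r β) := LqNorm_mono_set hsub _
      _ ≤ U * (B s + LqNorm r (Ico s t) (svWgt r β)) := hun _ _ _
      _ ≤ U * (ENNReal.ofReal ((t / s) ^ ε) * B s + C5 * ENNReal.ofReal C * ENNReal.ofReal ((t / s) ^ ε) * (D * B s)) := by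
          gcongr
          · exact le_mul_of_one_le_left zero_le hone
          · exact hsec.trans (by gcongr; exact hlow s hs)
      _ = _ := by ring
  have hfinite : ∀ t : ℝ, 0 < t → B t ≠ ∞ := by
    intro t ht
    rcases le_total t 1 with h | h
    · exact ne_top_of_le_ne_top hfin (hmono _ _ h)
    · obtain ⟨G, hG, hg⟩ := hgrow 1 one_pos
      refine ne_top_of_le_ne_top ?_ (hg 1 t one_pos h)
      have : B 1 ≠ ∞ := hfin
      finiteness
  have hlow' : ∀ t : ℝ, 0 < t → β t ≤ (D.toReal + 1) * (B t).toReal := by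
    intro t ht
    have h1 := ENNReal.toReal_mono (ENNReal.mul_ne_top hD (hfinite t ht)) (hlow t ht)
    rw [ENNReal.toReal_ofReal (hβ.1 t ht).le, ENNReal.toReal_mul] at h1
    have : 0 ≤ (B t).toReal := ENNReal.toReal_nonneg
    linarith
  have hpos : ∀ t : ℝ, 0 < t → 0 < (B t).toReal := by
    intro t ht
    have h1 := (hβ.1 t ht).trans_le (hlow' t ht)
    have : 0 ≤ D.toReal := ENNReal.toReal_nonneg
    exact pos_of_mul_pos_right h1 (by linarith)
  refine ⟨hfinite, ⟨D.toReal + 1, by positivity, hlow'⟩, hpos, fun ε hε => ?_⟩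
  obtain ⟨G, hG, hg⟩ := hgrow ε hε
  refine ⟨G.toReal + 1, by linarith [ENNReal.toReal_nonneg (a := G)], fun s t hs hst => ?_⟩
  have ht := hs.trans_le hst
  have hone : 1 ≤ (t / s) ^ ε := Real.one_le_rpow ((one_le_div hs).2 hst) hε.le
  have hGn : 0 ≤ G.toReal := ENNReal.toReal_nonneg
  constructor
  · have h1 := ENNReal.toReal_mono (hfinite t ht) (hmono s t hst)
    refine h1.trans ?_
    refine le_mul_of_one_le_left (hpos t ht).le ?_
    nlinarith
  · have h1 := ENNReal.toReal_mono (by have := hfinite s hs; finiteness) (hg s t hs hst)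
    rw [ENNReal.toReal_mul, ENNReal.toReal_mul, ENNReal.toReal_ofReal (by positivity)] at h1
    refine h1.trans ?_
    have := hpos s hs
    gcongr
    linarith

theorem LqNorm_Ioc (q : ℝ≥0∞) (s t : ℝ) (g : ℝ → ℝ≥0∞) : LqNorm q (Ioc s t) g = LqNorm q (Ioo s t) g := by
  unfold LqNorm
  rw [Measure.restrict_congr_set (Ioo_ae_eq_Ioc (μ := volume) (a := s) (b := t))]

theorem R_upper {q r : ℝ≥0∞} (hq : 0 < q) (hr : 0 < r) {θ₁ : ℝ} (hθ₁ : θ₁ < 1)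
    {a₁ β B ρ : ℝ → ℝ} (ha : SVB a₁) (hβ : ∀ t : ℝ, 0 < t → 0 < β t)
    (hB : ∀ t : ℝ, 0 < t → 0 < B t) (hBm : ∀ s t : ℝ, 0 < s → s ≤ t → B s ≤ B t)
    (hβB : ∃ C : ℝ, 0 < C ∧ ∀ t : ℝ, 0 < t → β t ≤ C * B t)
    (hLB : ∀ t : ℝ, 0 < t → LqNorm r (Ioo 0 t) (svWgt r β) = ENNReal.ofReal (B t))
    (hρ : ∀ t, ρ t = t ^ θ₁ / (a₁ t * B t)) {ε : ℝ} (hε : 0 < ε) :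
    ∃ C : ℝ≥0∞, C ≠ ∞ ∧ ∀ (H : ℝ → ℝ≥0∞) (t : ℝ) (δ : ℝ≥0∞), 0 < t → δ ≠ ∞ →
      (∀ u, 0 < u → u ≤ t → H u ≤ δ * ENNReal.ofReal (u / t)) →
      (∀ u, t ≤ u → H u ≤ δ * ENNReal.ofReal (ρ u / ρ t * (t / u) ^ ε)) →
      LqNorm r (Ioi 0) (fun s => ENNReal.ofReal (s ^ (-(r⁻¹.toReal)) * β s) *
        LqNorm q (Ioi s) (fun u => ENNReal.ofReal (u ^ (-θ₁ - q⁻¹.toReal) * a₁ u) * H u))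
        ≤ C * δ * ENNReal.ofReal ((ρ t)⁻¹) := by
  obtain ⟨Cb, hCb, hbB⟩ := hβB
  obtain ⟨Uq, hUq, huq⟩ := LqNorm_union q
  obtain ⟨Ur, hUr, hur⟩ := LqNorm_union r
  obtain ⟨C4, hC4, h4⟩ := L4 hq hε
  obtain ⟨C4', hC4', h4'⟩ := L4 hr hε
  set e2 : ℝ := (1 - θ₁) / 2 with he2
  have he2p : 0 < e2 := by rw [he2]; linarith
  obtain ⟨C5, hC5, h5⟩ := L5 hq he2p
  obtain ⟨Ca, hCa, hasv⟩ := ha.2 e2 he2p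
  have hρp : ∀ t : ℝ, 0 < t → 0 < ρ t := by
    intro t ht
    rw [hρ]
    have := hB t ht
    have := ha.1 t ht
    positivity
  refine ⟨Ur * (Uq * (ENNReal.ofReal Ca * C5 + C4) + C4 * ENNReal.ofReal Cb * C4'), by finiteness,
    fun H t δ ht hδ h1 h2 => ?_⟩
  set Q : ℝ → ℝ≥0∞ := fun s => LqNorm q (Ioi s) (fun u => ENNReal.ofReal (u ^ (-θ₁ - q⁻¹.toReal) * a₁ u) * H u) with hQ
  have hρt := hρp t ht
  have hBt := hB t ht
  have hat := ha.1 t ht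
  have hQ1 : ∀ s, t ≤ s → Q s ≤ C4 * δ * ENNReal.ofReal (t ^ ε / (ρ t * B s) * s ^ (-ε)) := by
    intro s hs
    have hs0 := ht.trans_le hs
    have hBs := hB s hs0
    calc Q s ≤ LqNorm q (Ioi s) (fun u => (δ * ENNReal.ofReal (t ^ ε / (ρ t * B s))) * ENNReal.ofReal (u ^ (-(q⁻¹.toReal)) * u ^ (-ε))) := by
          refine LqNorm_mono measurableSet_Ioi fun u hu => ?_
          have hu0 : 0 < u := hs0.trans hu
          have hBu := hB u hu0
          have hau := ha.1 u hu0
          have hρu := hρp u hu0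
          calc _ ≤ ENNReal.ofReal (u ^ (-θ₁ - q⁻¹.toReal) * a₁ u) * (δ * ENNReal.ofReal (ρ u / ρ t * (t / u) ^ ε)) := by
                gcongr; exact h2 u (hs.trans (le_of_lt hu))
            _ = δ * ENNReal.ofReal (u ^ (-θ₁ - q⁻¹.toReal) * a₁ u * (ρ u / ρ t * (t / u) ^ ε)) := by
                rw [mul_left_comm, ← ENNReal.ofReal_mul (by positivity)]
            _ ≤ δ * ENNReal.ofReal (t ^ ε / (ρ t * B s) * (u ^ (-(q⁻¹.toReal)) * u ^ (-ε))) := by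
                gcongr δ * ENNReal.ofReal ?_
                have e1 : u ^ (-θ₁ - q⁻¹.toReal) * a₁ u * (ρ u / ρ t * (t / u) ^ ε)
                    = t ^ ε / (ρ t * B u) * (u ^ (-(q⁻¹.toReal)) * u ^ (-ε)) := by
                  rw [hρ u, Real.div_rpow ht.le hu0.le, sub_eq_add_neg, Real.rpow_add hu0, Real.rpow_neg hu0.le θ₁, Real.rpow_neg hu0.le ε]
                  field_simp
                rw [e1]
                gcongr
                exact hBm s u hs0 (le_of_lt hu)
            _ = _ := by rw [mul_assoc, ← ENNReal.ofReal_mul (by positivity)]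
      _ ≤ δ * ENNReal.ofReal (t ^ ε / (ρ t * B s)) * (C4 * ENNReal.ofReal (s ^ (-ε))) := by
          rw [LqNorm_const_mul hq _ _ (by finiteness)]
          gcongr
          exact h4 s hs0
      _ = _ := by
          rw [ENNReal.ofReal_mul (by positivity)]; ring
  have hQt : Q t ≤ C4 * δ * ENNReal.ofReal ((ρ t * B t)⁻¹) := by
    refine (hQ1 t le_rfl).trans_eq ?_
    congr 2
    rw [Real.rpow_neg ht.le]
    have : t ^ ε ≠ 0 := by positivity
    field_simp
  have hQ0 : LqNorm q (Ioc 0 t) (fun u => ENNReal.ofReal (u ^ (-θ₁ - q⁻¹.toReal) * a₁ u) * H u)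
      ≤ ENNReal.ofReal Ca * C5 * δ * ENNReal.ofReal ((ρ t * B t)⁻¹) := by
    calc _ ≤ LqNorm q (Ioc 0 t) (fun u => (δ * ENNReal.ofReal (Ca * a₁ t * t ^ e2 / t)) * ENNReal.ofReal (u ^ (-(q⁻¹.toReal)) * u ^ e2)) := by
          refine LqNorm_mono measurableSet_Ioc fun u hu => ?_
          have hu0 : 0 < u := hu.1
          have hau := ha.1 u hu0
          calc _ ≤ ENNReal.ofReal (u ^ (-θ₁ - q⁻¹.toReal) * a₁ u) * (δ * ENNReal.ofReal (u / t)) := by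
                gcongr; exact h1 u hu0 hu.2
            _ = δ * ENNReal.ofReal (u ^ (-θ₁ - q⁻¹.toReal) * a₁ u * (u / t)) := by
                rw [mul_left_comm, ← ENNReal.ofReal_mul (by positivity)]
            _ ≤ δ * ENNReal.ofReal ((Ca * a₁ t * t ^ e2 / t) * (u ^ (-(q⁻¹.toReal)) * u ^ e2)) := by
                gcongr δ * ENNReal.ofReal ?_
                calc u ^ (-θ₁ - q⁻¹.toReal) * a₁ u * (u / t)
                    ≤ u ^ (-θ₁ - q⁻¹.toReal) * (Ca * (t / u) ^ e2 * a₁ t) * (u / t) := by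
                      gcongr; exact (hasv u t hu0 hu.2).1
                  _ = (Ca * a₁ t * t ^ e2 / t) * (u ^ (-θ₁ - q⁻¹.toReal) * u ^ (-e2) * u ^ (1:ℝ)) := by
                      rw [Real.div_rpow ht.le hu0.le, Real.rpow_neg hu0.le e2, Real.rpow_one]
                      ring
                  _ = _ := by
                      rw [← Real.rpow_add hu0, ← Real.rpow_add hu0, ← Real.rpow_add hu0]
                      congr 2
                      rw [he2]; ring
            _ = _ := by rw [mul_assoc δ, ← ENNReal.ofReal_mul (by positivity)]
      _ ≤ (δ * ENNReal.ofReal (Ca * a₁ t * t ^ e2 / t)) * (C5 * ENNReal.ofReal (t ^ e2)) := by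
          rw [LqNorm_const_mul hq _ _ (by finiteness), LqNorm_Ioc]
          gcongr
          exact h5 t ht
      _ = C5 * δ * ENNReal.ofReal (Ca * (ρ t * B t)⁻¹) := by
          have e : Ca * (ρ t * B t)⁻¹ = Ca * a₁ t * t ^ e2 / t * t ^ e2 := by
            have e3 : t ^ e2 * t ^ e2 * t ^ θ₁ = t := by
              rw [← Real.rpow_add ht, ← Real.rpow_add ht, he2]
              ring_nf; exact Real.rpow_one t
            rw [hρ t]
            have h6 : t ^ θ₁ ≠ 0 := by positivity
            field_simp
            linear_combination -e3
          rw [e, ENNReal.ofReal_mul (by positivity)]; ring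
      _ = _ := by rw [ENNReal.ofReal_mul (by positivity)]; ring
  have hQ2 : ∀ s, 0 < s → s ≤ t → Q s ≤ Uq * (ENNReal.ofReal Ca * C5 + C4) * δ * ENNReal.ofReal ((ρ t * B t)⁻¹) := by
    intro s hs hst
    calc Q s ≤ LqNorm q (Ioc 0 t ∪ Ioi t) (fun u => ENNReal.ofReal (u ^ (-θ₁ - q⁻¹.toReal) * a₁ u) * H u) := by
          refine LqNorm_mono_set (fun u hu => ?_) _
          rcases le_or_gt u t with h | h
          · exact Or.inl ⟨hs.trans hu, h⟩
          · exact Or.inr h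
      _ ≤ Uq * (_ + Q t) := huq _ _ _
      _ ≤ Uq * (ENNReal.ofReal Ca * C5 * δ * ENNReal.ofReal ((ρ t * B t)⁻¹) + C4 * δ * ENNReal.ofReal ((ρ t * B t)⁻¹)) := by
          gcongr
      _ = _ := by ring
  have hO1 : LqNorm r (Ioc 0 t) (fun s => ENNReal.ofReal (s ^ (-(r⁻¹.toReal)) * β s) * Q s)
      ≤ Uq * (ENNReal.ofReal Ca * C5 + C4) * δ * ENNReal.ofReal ((ρ t)⁻¹) := by
    calc _ ≤ LqNorm r (Ioc 0 t) (fun s => (Uq * (ENNReal.ofReal Ca * C5 + C4) * δ * ENNReal.ofReal ((ρ t * B t)⁻¹)) * svWgt r β s) := by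
          refine LqNorm_mono measurableSet_Ioc fun s hs => ?_
          rw [mul_comm]
          exact mul_le_mul' (hQ2 s hs.1 hs.2) le_rfl
      _ = Uq * (ENNReal.ofReal Ca * C5 + C4) * δ * (ENNReal.ofReal ((ρ t * B t)⁻¹) * ENNReal.ofReal (B t)) := by
          rw [LqNorm_const_mul hr _ _ (by finiteness), LqNorm_Ioc, hLB t ht]; ring
      _ = _ := by
          rw [← ENNReal.ofReal_mul (by positivity)]
          congr 2; field_simp
  have hO2 : LqNorm r (Ioi t) (fun s => ENNReal.ofReal (s ^ (-(r⁻¹.toReal)) * β s) * Q s)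
      ≤ C4 * ENNReal.ofReal Cb * C4' * δ * ENNReal.ofReal ((ρ t)⁻¹) := by
    calc _ ≤ LqNorm r (Ioi t) (fun s => (C4 * δ * ENNReal.ofReal (Cb * t ^ ε / ρ t)) * ENNReal.ofReal (s ^ (-(r⁻¹.toReal)) * s ^ (-ε))) := by
          refine LqNorm_mono measurableSet_Ioi fun s hs => ?_
          have hs0 : 0 < s := ht.trans hs
          have hBs := hB s hs0
          have hβs := hβ s hs0
          calc _ ≤ ENNReal.ofReal (s ^ (-(r⁻¹.toReal)) * β s) * (C4 * δ * ENNReal.ofReal (t ^ ε / (ρ t * B s) * s ^ (-ε))) := by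
                gcongr; exact hQ1 s (le_of_lt hs)
            _ = C4 * δ * ENNReal.ofReal (s ^ (-(r⁻¹.toReal)) * β s * (t ^ ε / (ρ t * B s) * s ^ (-ε))) := by
                rw [mul_left_comm, ← ENNReal.ofReal_mul (by positivity)]
            _ ≤ C4 * δ * ENNReal.ofReal ((Cb * t ^ ε / ρ t) * (s ^ (-(r⁻¹.toReal)) * s ^ (-ε))) := by
                gcongr C4 * δ * ENNReal.ofReal ?_
                calc s ^ (-(r⁻¹.toReal)) * β s * (t ^ ε / (ρ t * B s) * s ^ (-ε))
                    ≤ s ^ (-(r⁻¹.toReal)) * (Cb * B s) * (t ^ ε / (ρ t * B s) * s ^ (-ε)) := by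
                      gcongr; exact hbB s hs0
                  _ = _ := by field_simp
            _ = _ := by rw [mul_assoc _ (ENNReal.ofReal _), ← ENNReal.ofReal_mul (by positivity)]
      _ ≤ (C4 * δ * ENNReal.ofReal (Cb * t ^ ε / ρ t)) * (C4' * ENNReal.ofReal (t ^ (-ε))) := by
          rw [LqNorm_const_mul hr _ _ (by finiteness)]
          gcongr
          exact h4' t ht
      _ = C4 * C4' * δ * (ENNReal.ofReal (Cb * t ^ ε / ρ t) * ENNReal.ofReal (t ^ (-ε))) := by ring
      _ = C4 * C4' * δ * (ENNReal.ofReal Cb * ENNReal.ofReal ((ρ t)⁻¹)) := by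
          rw [← ENNReal.ofReal_mul (by positivity), ← ENNReal.ofReal_mul (by positivity), Real.rpow_neg ht.le]
          congr 2
          have : t ^ ε ≠ 0 := by positivity
          field_simp
      _ = _ := by ring
  calc _ ≤ LqNorm r (Ioc 0 t ∪ Ioi t) (fun s => ENNReal.ofReal (s ^ (-(r⁻¹.toReal)) * β s) * Q s) := by
        rw [Ioc_union_Ioi_eq_Ioi ht.le]
    _ ≤ Ur * (_ + _) := hur _ _ _
    _ ≤ Ur * (Uq * (ENNReal.ofReal Ca * C5 + C4) * δ * ENNReal.ofReal ((ρ t)⁻¹) + C4 * ENNReal.ofReal Cb * C4' * δ * ENNReal.ofReal ((ρ t)⁻¹)) := by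
        gcongr
    _ = _ := by ring

theorem R_lower {q r : ℝ≥0∞} (hq : 0 < q) (hr : 0 < r) {θ₁ : ℝ} (hθ₁ : 0 < θ₁)
    {a₁ β B ρ : ℝ → ℝ} (ha : SVB a₁) (hβ : ∀ t : ℝ, 0 < t → 0 < β t)
    (hB : ∀ t : ℝ, 0 < t → 0 < B t)
    (hLB : ∀ t : ℝ, 0 < t → LqNorm r (Ioo 0 t) (svWgt r β) = ENNReal.ofReal (B t))
    (hρ : ∀ t, ρ t = t ^ θ₁ / (a₁ t * B t)) :
    ∃ C : ℝ≥0∞, C ≠ ∞ ∧ ∀ (H : ℝ → ℝ≥0∞) (t : ℝ), 0 < t → (∀ u, t ≤ u → H t ≤ H u) →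
      H t ≤ C * ENNReal.ofReal (ρ t) *
      LqNorm r (Ioi 0) (fun s => ENNReal.ofReal (s ^ (-(r⁻¹.toReal)) * β s) *
        LqNorm q (Ioi s) (fun u => ENNReal.ofReal (u ^ (-θ₁ - q⁻¹.toReal) * a₁ u) * H u)) := by
  obtain ⟨c, hc0, hct, hc⟩ := L6 hq
  obtain ⟨Ca, hCa, hasv⟩ := ha.2 1 one_pos
  set G : ℝ := Ca * 2 * 2 ^ θ₁ with hG
  have hGp : 0 < G := by positivity
  refine ⟨c⁻¹ * ENNReal.ofReal G, by finiteness, fun H t ht hH => ?_⟩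
  have hBt := hB t ht
  have hat := ha.1 t ht
  set Q : ℝ → ℝ≥0∞ := fun s => LqNorm q (Ioi s) (fun u => ENNReal.ofReal (u ^ (-θ₁ - q⁻¹.toReal) * a₁ u) * H u) with hQ
  have hρt : 0 < ρ t := by rw [hρ]; positivity
  -- truncation to a finite value
  have main : ∀ h : ℝ≥0∞, h ≠ ∞ → h ≤ H t → h ≤ c⁻¹ * ENNReal.ofReal G * ENNReal.ofReal (ρ t) *
      LqNorm r (Ioi 0) (fun s => ENNReal.ofReal (s ^ (-(r⁻¹.toReal)) * β s) * Q s) := by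
    intro h hh hle
    have hQt : ENNReal.ofReal (t ^ (-θ₁) * a₁ t / G) * h * c ≤ Q t := by
      calc _ ≤ ENNReal.ofReal (t ^ (-θ₁) * a₁ t / G) * h * LqNorm q (Ioo t (2 * t)) (fun u => ENNReal.ofReal (u ^ (-(q⁻¹.toReal)))) := by
            gcongr; exact hc t ht
        _ = LqNorm q (Ioo t (2 * t)) (fun u => ENNReal.ofReal (t ^ (-θ₁) * a₁ t / G) * h * ENNReal.ofReal (u ^ (-(q⁻¹.toReal)))) :=
            (LqNorm_const_mul hq _ _ (by finiteness)).symm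
        _ ≤ LqNorm q (Ioo t (2 * t)) (fun u => ENNReal.ofReal (u ^ (-θ₁ - q⁻¹.toReal) * a₁ u) * H u) := by
            refine LqNorm_mono measurableSet_Ioo fun u hu => ?_
            have hu0 := ht.trans hu.1
            have hau := ha.1 u hu0
            rw [mul_right_comm, ← ENNReal.ofReal_mul (by positivity)]
            refine mul_le_mul' (ENNReal.ofReal_le_ofReal ?_) (hle.trans (hH u hu.1.le))
            rw [sub_eq_add_neg, Real.rpow_add hu0, mul_right_comm]
            gcongr
            rw [div_le_iff₀ hGp]
            have h1 := (hasv t u ht hu.1.le).1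
            rw [Real.rpow_one] at h1
            have h2 : u / t ≤ 2 := by rw [div_le_iff₀ ht]; exact hu.2.le
            have h3 : t ^ (-θ₁) ≤ 2 ^ θ₁ * u ^ (-θ₁) := by
              have : (2 * t) ^ (-θ₁) ≤ u ^ (-θ₁) :=
                Real.rpow_le_rpow_of_nonpos hu0 hu.2.le (by linarith)
              rw [Real.mul_rpow (by norm_num) ht.le, Real.rpow_neg (by norm_num : (0:ℝ) ≤ 2)] at this
              rwa [inv_mul_le_iff₀ (by positivity)] at this
            calc t ^ (-θ₁) * a₁ t ≤ (2 ^ θ₁ * u ^ (-θ₁)) * (Ca * 2 * a₁ u) := by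
                  gcongr
                  refine h1.trans ?_
                  gcongr
              _ = _ := by rw [hG]; ring
        _ ≤ Q t := LqNorm_mono_set Ioo_subset_Ioi_self _
    have hO : ENNReal.ofReal (B t) * (ENNReal.ofReal (t ^ (-θ₁) * a₁ t / G) * h * c) ≤
        LqNorm r (Ioi 0) (fun s => ENNReal.ofReal (s ^ (-(r⁻¹.toReal)) * β s) * Q s) := by
      rw [← hLB t ht, mul_comm, ← LqNorm_const_mul hr _ _ (by finiteness)]
      refine (LqNorm_mono measurableSet_Ioo fun s hs => ?_).trans (LqNorm_mono_set Ioo_subset_Ioi_self _)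
      rw [mul_comm]
      refine mul_le_mul' le_rfl (hQt.trans (LqNorm_mono_set (Ioi_subset_Ioi hs.2.le) _))
    calc h = c⁻¹ * ENNReal.ofReal G * ENNReal.ofReal (ρ t) * (ENNReal.ofReal (B t) * (ENNReal.ofReal (t ^ (-θ₁) * a₁ t / G) * h * c)) := by
          rw [show c⁻¹ * ENNReal.ofReal G * ENNReal.ofReal (ρ t) * (ENNReal.ofReal (B t) * (ENNReal.ofReal (t ^ (-θ₁) * a₁ t / G) * h * c))
            = (c⁻¹ * c) * (ENNReal.ofReal G * ENNReal.ofReal (ρ t) * ENNReal.ofReal (B t) * ENNReal.ofReal (t ^ (-θ₁) * a₁ t / G)) * h by ring,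
            ENNReal.inv_mul_cancel hc0 hct, one_mul, ← ENNReal.ofReal_mul (by positivity),
            ← ENNReal.ofReal_mul (by positivity), ← ENNReal.ofReal_mul (by positivity)]
          have : G * ρ t * B t * (t ^ (-θ₁) * a₁ t / G) = 1 := by
            rw [hρ t, Real.rpow_neg ht.le]
            have : t ^ θ₁ ≠ 0 := by positivity
            field_simp
          rw [this]; simp
      _ ≤ _ := by gcongr
  by_cases hHt : H t = ∞
  · rw [hHt, top_le_iff]
    refine ENNReal.eq_top_of_forall_nnreal_le fun x => main x (by simp) (by rw [hHt]; exact le_top)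
  · exact main _ hHt le_rfl

theorem lg_zpow (k : ℤ) : Real.logb 2 ((2:ℝ) ^ k) = k := by
  rw [← Real.rpow_intCast, Real.logb_rpow (by norm_num) (by norm_num)]

theorem lg_le {x y : ℝ} (hx : 0 < x) (hy : 0 < y) (h : Real.logb 2 x ≤ Real.logb 2 y) : x ≤ y :=
  (Real.logb_le_logb (by norm_num) hx hy).1 h

theorem lg_mono {x y : ℝ} (hx : 0 < x) (h : x ≤ y) : Real.logb 2 x ≤ Real.logb 2 y :=
  (Real.logb_le_logb (by norm_num) hx (hx.trans_le h)).2 h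

theorem SVB.lg {a : ℝ → ℝ} (ha : SVB a) {ε : ℝ} (hε : 0 < ε) : ∃ c : ℝ, 0 ≤ c ∧ ∀ s t : ℝ, 0 < s → 0 < t →
    |Real.logb 2 (a s) - Real.logb 2 (a t)| ≤ ε * |Real.logb 2 s - Real.logb 2 t| + c := by
  obtain ⟨C, hC, h⟩ := ha.2 ε hε
  refine ⟨Real.logb 2 C, Real.logb_nonneg (by norm_num) hC, ?_⟩
  have hC0 : (0:ℝ) < C := by linarith
  have key : ∀ s t : ℝ, 0 < s → s ≤ t → |Real.logb 2 (a s) - Real.logb 2 (a t)| ≤ ε * |Real.logb 2 s - Real.logb 2 t| + Real.logb 2 C := by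
    intro s t hs hst
    have ht := hs.trans_le hst
    have hts : 0 < t / s := by positivity
    have has := ha.1 s hs
    have hat := ha.1 t ht
    obtain ⟨h1, h2⟩ := h s t hs hst
    have e : ∀ x : ℝ, 0 < x → Real.logb 2 (C * (t / s) ^ ε * x) = Real.logb 2 C + ε * (Real.logb 2 t - Real.logb 2 s) + Real.logb 2 x := by
      intro x hx
      rw [Real.logb_mul (by positivity) hx.ne', Real.logb_mul (by positivity) (by positivity),
        Real.logb_rpow_eq_mul_logb_of_pos hts, Real.logb_div ht.ne' hs.ne']
    have h1' := lg_mono has h1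
    have h2' := lg_mono hat h2
    rw [e _ hat] at h1'
    rw [e _ has] at h2'
    have := lg_mono hs hst
    rw [abs_of_nonpos (by linarith : Real.logb 2 s - Real.logb 2 t ≤ 0), abs_le]
    constructor <;> linarith
  intro s t hs ht
  rcases le_total s t with h | h
  · exact key s t hs h
  · rw [abs_sub_comm, abs_sub_comm (Real.logb 2 s)]; exact key t s ht h

set_option maxHeartbeats 2000000 in
theorem interp_final {r : ℝ≥0∞} (hr : 0 < r) {θ θ₁ : ℝ} (hθ : 0 ≤ θ) (hθ' : θ < 1) (hθ₁ : 0 < θ₁)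
    {a ρ : ℝ → ℝ} (ha : SVB a) (hρ : ∀ t : ℝ, 0 < t → 0 < ρ t) {c₀ : ℝ} (hc₀ : 0 ≤ c₀)
    (hgr : ∀ s t : ℝ, 0 < s → s ≤ t →
      θ₁ / 2 * (Real.logb 2 t - Real.logb 2 s) - c₀ ≤ Real.logb 2 (ρ t) - Real.logb 2 (ρ s) ∧
      Real.logb 2 (ρ t) - Real.logb 2 (ρ s) ≤ 2 * θ₁ * (Real.logb 2 t - Real.logb 2 s) + c₀)
    {C₁ C₂ : ℝ≥0∞} (hC₁ : C₁ ≠ ∞) (hC₂ : C₂ ≠ ∞) :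
    ∃ C : ℝ≥0∞, C ≠ ∞ ∧ ∀ K Kb : ℝ → ℝ≥0∞,
      (∀ s t, s ≤ t → K s ≤ K t) → (∀ s t, s ≤ t → Kb s ≤ Kb t) →
      (∀ s t, t ≤ 2 * s → K t ≤ 2 * K s) → (∀ s t, t ≤ 2 * s → Kb t ≤ 2 * Kb s) →
      (∀ t, 0 < t → K t ≤ C₁ * Kb (ρ t)) →
      (∀ t M, 0 < t → (∀ u, t ≤ u → K u ≤ M * ENNReal.ofReal (ρ u / ρ t * (t / u) ^ ((1 - θ) / 4 * (θ₁ / 2)))) →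
        Kb (ρ t) ≤ C₂ * M) →
      LqNorm r (Ioi 0) (fun u => ENNReal.ofReal (u ^ (-(r⁻¹.toReal))) * (ENNReal.ofReal (u ^ (-θ) * a u) * Kb u)) ≤
        C * LqNorm r (Ioi 0) (fun u => ENNReal.ofReal (u ^ (-(r⁻¹.toReal))) * (ENNReal.ofReal ((ρ u) ^ (-θ) * a (ρ u)) * K u)) ∧
      LqNorm r (Ioi 0) (fun u => ENNReal.ofReal (u ^ (-(r⁻¹.toReal))) * (ENNReal.ofReal ((ρ u) ^ (-θ) * a (ρ u)) * K u)) ≤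
        C * LqNorm r (Ioi 0) (fun u => ENNReal.ofReal (u ^ (-(r⁻¹.toReal))) * (ENNReal.ofReal (u ^ (-θ) * a u) * Kb u)) := by
  set e : ℝ := (1 - θ) / 4 with he
  have hep : 0 < e := by rw [he]; linarith
  obtain ⟨c, hc, hal⟩ := ha.lg hep
  set w : ℝ → ℝ := fun s => s ^ (-θ) * a s with hw
  have hwp : ∀ s : ℝ, 0 < s → 0 < w s := fun s hs => mul_pos (Real.rpow_pos_of_pos hs _) (ha.1 s hs)
  have hwl : ∀ s : ℝ, 0 < s → Real.logb 2 (w s) = -θ * Real.logb 2 s + Real.logb 2 (a s) := by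
    intro s hs
    rw [hw]
    simp only
    rw [Real.logb_mul (by positivity) (ha.1 s hs).ne', Real.logb_rpow_eq_mul_logb_of_pos hs]
  have hwq : ∀ l : ℝ, ∃ W : ℝ, 0 < W ∧ ∀ s t : ℝ, 0 < s → 0 < t → |Real.logb 2 s - Real.logb 2 t| ≤ l → w s ≤ W * w t := by
    intro l
    refine ⟨2 ^ ((θ + e) * l + c), by positivity, fun s t hs ht hst => ?_⟩
    have hwt := hwp t ht
    refine lg_le (hwp s hs) (by positivity) ?_
    rw [Real.logb_mul (by positivity) hwt.ne', Real.logb_rpow (by norm_num) (by norm_num), hwl s hs, hwl t ht]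
    have h1 := (abs_le.1 (hal s t hs ht)).2
    have h2 := (abs_le.1 hst).1
    have h3 : e * |Real.logb 2 s - Real.logb 2 t| ≤ e * l := by gcongr
    nlinarith
  have h2k : ∀ k : ℤ, (0:ℝ) < 2 ^ k := fun k => by positivity
  set p : ℤ → ℝ := fun i => Real.logb 2 (ρ (2 ^ i)) with hp
  have hp1 : ∀ i j : ℤ, i ≤ j → θ₁ / 2 * ((j:ℝ) - i) - c₀ ≤ p j - p i ∧ p j - p i ≤ 2 * θ₁ * ((j:ℝ) - i) + c₀ := by
    intro i j hij
    have := hgr (2 ^ i) (2 ^ j) (h2k i) (zpow_le_zpow_right₀ (by norm_num) hij)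
    rwa [lg_zpow, lg_zpow] at this
  set c1 : ℝ := 2 * θ₁ + c₀ with hc1
  have hj : ∀ k : ℤ, ∃ j : ℤ, (k:ℝ) ≤ p j ∧ p j ≤ k + c1 := by
    intro k
    obtain ⟨j, hj1, hj2⟩ := Int.exists_least_of_bdd (P := fun j : ℤ => (k:ℝ) ≤ p j) (by
      refine ⟨min 0 ⌊((k:ℝ) - p 0 - c₀) / (θ₁ / 2)⌋, fun z hz => ?_⟩
      rcases le_total 0 z with h | h
      · exact (min_le_left _ _).trans h
      · refine (min_le_right _ _).trans ?_
        have h1 := (hp1 z 0 h).1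
        have h2 : ((k:ℝ) - p 0 - c₀) / (θ₁ / 2) ≤ z := by
          rw [div_le_iff₀ (by positivity)]
          push_cast at h1
          nlinarith
        exact_mod_cast (Int.floor_le _).trans h2) (by
      refine ⟨max 0 ⌈((k:ℝ) - p 0 + c₀) / (θ₁ / 2)⌉, ?_⟩
      set z := max 0 ⌈((k:ℝ) - p 0 + c₀) / (θ₁ / 2)⌉ with hz
      have h1 := (hp1 0 z (le_max_left _ _)).1
      have h2 : ((k:ℝ) - p 0 + c₀) / (θ₁ / 2) ≤ z :=
        (Int.le_ceil _).trans (by exact_mod_cast le_max_right _ _)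
      rw [div_le_iff₀ (by positivity)] at h2
      push_cast at h1
      nlinarith)
    refine ⟨j, hj1, ?_⟩
    have h1 : p (j - 1) < k := by
      by_contra hcon
      have := hj2 (j - 1) (not_lt.1 hcon)
      omega
    have h2 := (hp1 (j - 1) j (by omega)).2
    push_cast at h2
    rw [hc1]; linarith
  choose J hJ1 hJ2 using hj
  set κ : ℤ → ℤ := fun i => ⌊p i⌋ with hκ
  have hκ1 : ∀ i, (κ i : ℝ) ≤ p i := fun i => Int.floor_le _
  have hκ2 : ∀ i, p i < κ i + 1 := fun i => Int.lt_floor_add_one _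
  -- constants
  obtain ⟨W1, hW1, hw1⟩ := hwq 1
  obtain ⟨W2, hW2, hw2⟩ := hwq c1
  set D : ℝ≥0∞ := ENNReal.ofReal W1 * 2 + ENNReal.ofReal W2 * 2 with hD
  have hDt : D ≠ ∞ := by finiteness
  have hD1 : ENNReal.ofReal W1 * 2 ≤ D := le_self_add
  have hD2 : ENNReal.ofReal W2 * 2 ≤ D := le_add_self
  obtain ⟨MA, hMA, hsA⟩ := schur hr one_pos J
  obtain ⟨MB, hMB, hsB⟩ := schur hr hep κ
  set m₀ : ℝ := (1 + c1 + c₀) / (θ₁ / 2) with hm₀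
  set CA : ℝ≥0∞ := ENNReal.ofReal (2 ^ m₀) * (ENNReal.ofReal W1 * C₁ * 2) with hCA
  set C3 : ℝ := 2 ^ (1 + c + e + c₀ + c1 + e * c₀ + e * (θ₁ / 2) + 5 * e * c₀) with hC3
  set CB : ℝ≥0∞ := C₂ * ENNReal.ofReal C3 with hCB
  set P2 : ℝ≥0∞ := 2 ^ r⁻¹.toReal with hP2
  have hP2t : P2 ≠ ∞ := ENNReal.rpow_ne_top_of_nonneg ENNReal.toReal_nonneg (by simp)
  have hCAt : CA ≠ ∞ := by finiteness
  have hCBt : CB ≠ ∞ := by finiteness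
  refine ⟨D * (MB * (CB * (P2 * D))) + D * (MA * (CA * (P2 * D))), by finiteness,
    fun K Kb hKm hKbm hK2 hKb2 hlo hup => ?_⟩
  set FX : ℝ → ℝ≥0∞ := fun u => ENNReal.ofReal (w u) * Kb u with hFX
  set FY : ℝ → ℝ≥0∞ := fun u => ENNReal.ofReal (w (ρ u)) * K u with hFY
  have wmul : ∀ (W x y : ℝ) (A B : ℝ≥0∞), 0 < W → x ≤ W * y → A ≤ 2 * B →
      ENNReal.ofReal x * A ≤ ENNReal.ofReal W * 2 * (ENNReal.ofReal y * B) := by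
    intro W x y A B hW h1 h2
    calc ENNReal.ofReal x * A ≤ ENNReal.ofReal (W * y) * (2 * B) := by gcongr
      _ = _ := by rw [ENNReal.ofReal_mul hW.le]; ring
  have self2 : ∀ A : ℝ≥0∞, A ≤ 2 * A := fun A => by rw [two_mul]; exact le_self_add
  have hlog2 : ∀ s t : ℝ, 0 < s → s ≤ t → t ≤ 2 * s → Real.logb 2 s ≤ Real.logb 2 t ∧ Real.logb 2 t ≤ 1 + Real.logb 2 s := by
    intro s t hs hst hts
    refine ⟨lg_mono hs hst, ?_⟩
    have := lg_mono (hs.trans_le hst) hts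
    rwa [Real.logb_mul (by norm_num) hs.ne', Real.logb_self_eq_one (by norm_num)] at this
  have hX := discr hr hDt FX (by
    intro s t hs hst hts
    have ht := hs.trans_le hst
    obtain ⟨h1, h2⟩ := hlog2 s t hs hst hts
    constructor
    · refine (wmul W1 _ (w t) _ (Kb t) hW1 (hw1 s t hs ht ?_) ((hKbm s t hst).trans (self2 _))).trans (mul_le_mul' hD1 le_rfl)
      rw [abs_le]; constructor <;> linarith
    · refine (wmul W1 _ (w s) _ (Kb s) hW1 (hw1 t s ht hs ?_) (hKb2 s t hts)).trans (mul_le_mul' hD1 le_rfl)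
      rw [abs_le]; constructor <;> linarith)
  have hY := discr hr hDt FY (by
    intro s t hs hst hts
    have ht := hs.trans_le hst
    obtain ⟨h1, h2⟩ := hlog2 s t hs hst hts
    obtain ⟨h3, h4⟩ := hgr s t hs hst
    have h5 : |Real.logb 2 (ρ t) - Real.logb 2 (ρ s)| ≤ c1 := by
      rw [abs_le, hc1]; constructor <;> nlinarith
    constructor
    · refine (wmul W2 _ (w (ρ t)) _ (K t) hW2 (hw2 _ _ (hρ s hs) (hρ t ht) ?_) ((hKm s t hst).trans (self2 _))).trans (mul_le_mul' hD2 le_rfl)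
      rwa [abs_sub_comm]
    · exact (wmul W2 _ (w (ρ s)) _ (K s) hW2 (hw2 _ _ (hρ t ht) (hρ s hs) h5) (hK2 s t hts)).trans (mul_le_mul' hD2 le_rfl))
  -- step A
  have hA : dn r (fun i => FY (2 ^ i)) ≤ MA * (CA * dn r (fun k => FX (2 ^ k))) := by
    rw [← dn_const_mul hr]
    refine hsA _ _ fun i => ?_
    refine le_trans ?_ (le_iSup _ (κ i))
    have hρi := hρ _ (h2k i)
    have h1 : w (ρ (2 ^ i)) ≤ W1 * w (2 ^ κ i) := by
      refine hw1 _ _ hρi (h2k _) ?_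
      rw [lg_zpow, abs_le]
      have h3 := hκ1 i
      have h4 := hκ2 i
      simp only [hp] at h3 h4
      constructor <;> linarith
    have h2 : ρ (2 ^ i) ≤ 2 * 2 ^ κ i := by
      have := h2k (κ i)
      refine lg_le hρi (by positivity) ?_
      rw [Real.logb_mul (by norm_num) this.ne', Real.logb_self_eq_one (by norm_num), lg_zpow]
      have h4 := hκ2 i
      simp only [hp] at h4
      linarith
    have h3 : FY (2 ^ i) ≤ ENNReal.ofReal W1 * C₁ * 2 * FX (2 ^ κ i) := by
      calc ENNReal.ofReal (w (ρ (2 ^ i))) * K (2 ^ i) ≤ ENNReal.ofReal (W1 * w (2 ^ κ i)) * (C₁ * (2 * Kb (2 ^ κ i))) := by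
            gcongr
            exact (hlo _ (h2k i)).trans (by gcongr; exact hKb2 _ _ h2)
        _ = _ := by rw [ENNReal.ofReal_mul hW1.le]; ring
    have h4 : |((i - J (κ i) : ℤ) : ℝ)| ≤ m₀ := by
      have hk1 := hκ1 i
      have hk2 := hκ2 i
      have hj1 := hJ1 (κ i)
      have hj2 := hJ2 (κ i)
      rw [hm₀, le_div_iff₀ (by positivity)]
      push_cast
      rcases le_total i (J (κ i)) with h | h
      · have h5 := (hp1 _ _ h).1
        have : (i:ℝ) ≤ J (κ i) := by exact_mod_cast h
        rw [abs_of_nonpos (by linarith)]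
        nlinarith
      · have h5 := (hp1 _ _ h).1
        have : (J (κ i):ℝ) ≤ i := by exact_mod_cast h
        rw [abs_of_nonneg (by linarith)]
        nlinarith
    have h5 : 1 ≤ ENNReal.ofReal ((2:ℝ) ^ (-1 * |((i - J (κ i) : ℤ) : ℝ)|)) * ENNReal.ofReal (2 ^ m₀) := by
      rw [← ENNReal.ofReal_mul (by positivity), ← Real.rpow_add (by norm_num), ENNReal.one_le_ofReal]
      exact Real.one_le_rpow (by norm_num) (by linarith)
    calc FY (2 ^ i) ≤ 1 * (ENNReal.ofReal W1 * C₁ * 2 * FX (2 ^ κ i)) := by rwa [one_mul]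
      _ ≤ ENNReal.ofReal ((2:ℝ) ^ (-1 * |((i - J (κ i) : ℤ) : ℝ)|)) * ENNReal.ofReal (2 ^ m₀) * (ENNReal.ofReal W1 * C₁ * 2 * FX (2 ^ κ i)) := by
          gcongr
      _ = _ := by rw [hCA]; ring
  -- step B
  have hB : dn r (fun k => FX (2 ^ k)) ≤ MB * (CB * dn r (fun k => FY (2 ^ k))) := by
    rw [← dn_const_mul hr]
    refine hsB _ _ fun k => ?_
    simp_rw [mul_left_comm _ CB]
    rw [← ENNReal.mul_iSup]
    set S : ℝ≥0∞ := ⨆ i, ENNReal.ofReal ((2:ℝ) ^ (-e * |((k - κ i : ℤ):ℝ)|)) * FY (2 ^ i) with hS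
    have hwk := hwp _ (h2k k)
    have hρj := hρ _ (h2k (J k))
    have hle : (2:ℝ) ^ k ≤ ρ (2 ^ J k) := by
      refine lg_le (h2k k) hρj ?_
      rw [lg_zpow]; exact hJ1 k
    have hM := hup (2 ^ J k) (ENNReal.ofReal C3 * ENNReal.ofReal ((w (2 ^ k))⁻¹) * S) (h2k _) (by
      intro u hu
      have hu0 : 0 < u := (h2k _).trans_le hu
      obtain ⟨i, hi⟩ := exists_mem_Ico_zpow hu0 (by norm_num : (1:ℝ) < 2)
      have hρi := hρ _ (h2k i)
      have hρu := hρ u hu0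
      have hwi := hwp _ hρi
      have hji : J k ≤ i := by
        have := (zpow_lt_zpow_iff_right₀ (by norm_num : (1:ℝ) < 2)).1 (hu.trans_lt hi.2)
        omega
      have hui : u ≤ 2 * 2 ^ i := by
        have := hi.2.le
        rw [zpow_add_one₀ (by norm_num)] at this; linarith
      have hreal : 2 * (w (ρ (2 ^ i)))⁻¹ * 2 ^ (e * |((k - κ i : ℤ):ℝ)|) ≤
          C3 * (w (2 ^ k))⁻¹ * (ρ u / ρ (2 ^ J k) * (2 ^ J k / u) ^ (e * (θ₁ / 2))) := by
        have hJp := h2k (J k)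
        have hC3p : 0 < C3 := by positivity
        refine lg_le (by positivity) (by positivity) ?_
        rw [Real.logb_mul (by positivity) (by positivity), Real.logb_mul (by positivity) (by positivity),
          Real.logb_mul (by positivity) (by positivity), Real.logb_mul (by positivity) (by positivity),
          Real.logb_mul (by positivity) (by positivity), Real.logb_self_eq_one (by norm_num),
          Real.logb_inv, Real.logb_inv, Real.logb_rpow (by norm_num) (by norm_num), hC3,
          Real.logb_rpow (by norm_num) (by norm_num), Real.logb_div hρu.ne' hρj.ne',
          Real.logb_rpow_eq_mul_logb_of_pos (by positivity), Real.logb_div hJp.ne' hu0.ne',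
          hwl _ hρi, hwl _ (h2k k), lg_zpow, lg_zpow]
        have q1 := (abs_le.1 (hal (2 ^ k) (ρ (2 ^ i)) (h2k k) hρi)).2
        rw [lg_zpow, abs_sub_comm] at q1
        have q2 := (hgr _ _ (h2k i) hi.1).1
        rw [lg_zpow] at q2
        have q3 : Real.logb 2 u ≤ 1 + i := by
          have := (hlog2 _ _ (h2k i) hi.1 hui).2
          rwa [lg_zpow] at this
        have q4 : (i:ℝ) ≤ Real.logb 2 u := by
          have := (hlog2 _ _ (h2k i) hi.1 hui).1
          rwa [lg_zpow] at this
        have q5 := (hp1 _ _ hji).1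
        have q6 := hJ1 k
        have q7 := hJ2 k
        have q8 := hκ1 i
        have q9 := hκ2 i
        have q10 : ((J k : ℤ):ℝ) ≤ i := by exact_mod_cast hji
        change e * |p i - k| + c ≥ _ at q1
        change _ ≤ Real.logb 2 (ρ u) - p i at q2
        change 1 + -(-θ * p i + Real.logb 2 (a (ρ (2 ^ i)))) + _ ≤ _ + -(-θ * k + Real.logb 2 (a (2 ^ k))) + (Real.logb 2 (ρ u) - p (J k) + _)
        set d : ℝ := p i - k with hd
        have hdl : -c₀ ≤ d := by
          have : 0 ≤ θ₁ / 2 * ((i:ℝ) - J k) := mul_nonneg (by positivity) (by linarith)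
          linarith
        have hda : |d| ≤ d + 2 * c₀ := by
          rw [abs_le]; constructor <;> linarith
        have hka : |((k - κ i : ℤ):ℝ)| ≤ |d| + 1 := by
          push_cast
          have : (k:ℝ) - κ i = -d + (p i - κ i) := by rw [hd]; ring
          rw [this]
          refine (abs_add_le _ _).trans ?_
          rw [abs_neg]
          gcongr
          rw [abs_le]; constructor <;> linarith
        have hka' : e * |((k - κ i : ℤ):ℝ)| ≤ e * |d| + e := by
          have h := mul_le_mul_of_nonneg_left hka hep.le
          rwa [mul_add, mul_one] at h
        have hda' : e * |d| ≤ e * d + 2 * (e * c₀) := by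
          have h := mul_le_mul_of_nonneg_left hda hep.le
          rw [mul_add] at h
          linarith only [h]
        have hdl' : 0 ≤ e * d + e * c₀ := by
          have h := mul_nonneg hep.le (by linarith only [hdl] : 0 ≤ d + c₀)
          rwa [mul_add] at h
        have hij : e * (θ₁ / 2) * ((i:ℝ) - J k) ≤ e * d + e * c₀ := by
          rw [mul_assoc, ← mul_add]
          gcongr
          linarith
        have hu3 : e * (θ₁ / 2) * Real.logb 2 u ≤ e * (θ₁ / 2) * (1 + i) := by gcongr
        have hu4 : 0 ≤ θ₁ / 2 * (Real.logb 2 u - i) := mul_nonneg (by positivity) (by linarith)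
        have hθd : θ * p i - θ * k = d - 4 * (e * d) := by rw [hd, he]; ring
        linarith
      have hyi : FY (2 ^ i) ≤ ENNReal.ofReal ((2:ℝ) ^ (e * |((k - κ i : ℤ):ℝ)|)) * S := by
        calc FY (2 ^ i) = ENNReal.ofReal ((2:ℝ) ^ (e * |((k - κ i : ℤ):ℝ)|)) * (ENNReal.ofReal ((2:ℝ) ^ (-e * |((k - κ i : ℤ):ℝ)|)) * FY (2 ^ i)) := by
              rw [← mul_assoc, ← ENNReal.ofReal_mul (by positivity), ← Real.rpow_add (by norm_num)]
              simp
          _ ≤ _ := by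
              refine mul_le_mul' le_rfl ?_
              exact le_iSup (fun i => ENNReal.ofReal ((2:ℝ) ^ (-e * |((k - κ i : ℤ):ℝ)|)) * FY (2 ^ i)) i
      calc K u ≤ 2 * K (2 ^ i) := hK2 _ _ hui
        _ = 2 * (ENNReal.ofReal ((w (ρ (2 ^ i)))⁻¹) * FY (2 ^ i)) := by
            rw [hFY]
            simp only
            rw [← mul_assoc (ENNReal.ofReal _), ← ENNReal.ofReal_mul (by positivity), inv_mul_cancel₀ hwi.ne']
            simp
        _ ≤ 2 * (ENNReal.ofReal ((w (ρ (2 ^ i)))⁻¹) * (ENNReal.ofReal ((2:ℝ) ^ (e * |((k - κ i : ℤ):ℝ)|)) * S)) := by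
            gcongr
        _ = ENNReal.ofReal (2 * (w (ρ (2 ^ i)))⁻¹ * 2 ^ (e * |((k - κ i : ℤ):ℝ)|)) * S := by
            rw [ENNReal.ofReal_mul (by positivity), ENNReal.ofReal_mul (by positivity)]
            simp only [ENNReal.ofReal_ofNat]
            ring
        _ ≤ ENNReal.ofReal (C3 * (w (2 ^ k))⁻¹ * (ρ u / ρ (2 ^ J k) * (2 ^ J k / u) ^ (e * (θ₁ / 2)))) * S := by
            gcongr
        _ = _ := by
            rw [ENNReal.ofReal_mul (by positivity), ENNReal.ofReal_mul (by positivity)]; ring)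
    calc FX (2 ^ k) ≤ ENNReal.ofReal (w (2 ^ k)) * (C₂ * (ENNReal.ofReal C3 * ENNReal.ofReal ((w (2 ^ k))⁻¹) * S)) := by
          exact mul_le_mul' le_rfl ((hKbm _ _ hle).trans hM)
      _ = (ENNReal.ofReal (w (2 ^ k)) * ENNReal.ofReal ((w (2 ^ k))⁻¹)) * (C₂ * ENNReal.ofReal C3 * S) := by ring
      _ = CB * S := by
          rw [← ENNReal.ofReal_mul hwk.le, mul_inv_cancel₀ hwk.ne', ENNReal.ofReal_one, one_mul]
  constructor
  · calc _ ≤ D * dn r (fun k => FX (2 ^ k)) := hX.1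
      _ ≤ D * (MB * (CB * (P2 * D * LqNorm r (Ioi 0) (fun u => ENNReal.ofReal (u ^ (-(r⁻¹.toReal))) * FY u)))) := by
          gcongr D * ?_
          exact hB.trans (mul_le_mul' le_rfl (mul_le_mul' le_rfl hY.2))
      _ = (D * (MB * (CB * (P2 * D)))) * LqNorm r (Ioi 0) (fun u => ENNReal.ofReal (u ^ (-(r⁻¹.toReal))) * FY u) := by ring
      _ ≤ _ := mul_le_mul' le_self_add le_rfl
  · calc _ ≤ D * dn r (fun k => FY (2 ^ k)) := hY.1
      _ ≤ D * (MA * (CA * (P2 * D * LqNorm r (Ioi 0) (fun u => ENNReal.ofReal (u ^ (-(r⁻¹.toReal))) * FX u)))) := by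
          gcongr D * ?_
          exact hA.trans (mul_le_mul' le_rfl (mul_le_mul' le_rfl hX.2))
      _ = (D * (MA * (CA * (P2 * D)))) * LqNorm r (Ioi 0) (fun u => ENNReal.ofReal (u ^ (-(r⁻¹.toReal))) * FX u) := by ring
      _ ≤ _ := mul_le_mul' le_add_self le_rfl

theorem equiv_of {nX nY : E → ℝ≥0∞} {C : ℝ≥0∞} (hC : C ≠ ∞) (h : ∀ f, nX f ≤ C * nY f ∧ nY f ≤ C * nX f) :
    EquivNorms nX nY := by
  refine ⟨C + 1, by simp, by finiteness, fun f => ⟨?_, ?_⟩⟩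
  · rw [← ENNReal.div_eq_inv_mul]
    refine ENNReal.div_le_of_le_mul ?_
    rw [mul_comm]
    exact (h f).2.trans (by gcongr; exact le_self_add)
  · exact (h f).1.trans (by gcongr; exact le_self_add)

theorem le_of_dense {x C M : ℝ≥0∞} (hC0 : 1 ≤ C) (hC : C ≠ ∞) (h : ∀ δ, M < δ → δ ≠ ∞ → x ≤ C * δ) : x ≤ C * M := by
  have h0 : C ≠ 0 := (zero_lt_one.trans_le hC0).ne'
  rw [mul_comm, ← ENNReal.div_le_iff h0 hC]
  refine le_of_forall_gt_imp_ge_of_dense fun δ hδ => ?_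
  rcases eq_or_ne δ ∞ with rfl | hd
  · exact le_top
  · rw [ENNReal.div_le_iff h0 hC, mul_comm]
    exact h δ hδ hd

theorem Kf_lower (N₀ N₁ NR : E → ℝ≥0∞) {CQ C : ℝ≥0∞} (h1 : 1 ≤ CQ) (hCQ : CQ ≠ ∞) (hC : C ≠ ∞)
    (hq : ∀ x y, N₀ (x + y) ≤ CQ * (N₀ x + N₀ y)) {t s : ℝ}
    (h : ∀ f, Kf N₀ N₁ t f ≤ C * ENNReal.ofReal s * NR f) (f : E) :
    Kf N₀ N₁ t f ≤ CQ * (1 + C) * Kf N₀ NR s f := by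
  rw [Kf, Kf, ENNReal.mul_iInf_of_ne (by positivity) (by finiteness)]
  refine le_iInf fun g => ?_
  refine (Kf_quasi N₀ N₁ h1 hCQ hq t f g).trans ?_
  rw [mul_assoc]
  gcongr
  rw [mul_add]
  refine add_le_add ?_ ((h _).trans ?_)
  · exact le_mul_of_one_le_left' le_self_add
  · rw [mul_assoc]; gcongr; exact le_add_self

theorem Kf_le_N1 (N₀ N₁ : E → ℝ≥0∞) (h0 : N₀ 0 = 0) (t : ℝ) (f : E) :
    Kf N₀ N₁ t f ≤ ENNReal.ofReal t * N₁ f := by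
  refine (iInf_le _ 0).trans ?_
  simp [h0]

theorem Kf_upper (N₀ N₁ NR : E → ℝ≥0∞) (h0 : N₀ 0 = 0) (hneg : ∀ x, N₀ (-x) = N₀ x)
    {CQ C : ℝ≥0∞} (h1 : 1 ≤ CQ) (hCQ : CQ ≠ ∞) (hC : C ≠ ∞)
    (hq : ∀ x y, N₀ (x + y) ≤ CQ * (N₀ x + N₀ y)) {ρ : ℝ → ℝ} (hρ : ∀ t, 0 < t → 0 < ρ t) {ε G : ℝ}
    (hG : ∀ t u : ℝ, 0 < t → t ≤ u → 1 ≤ G * (ρ u / ρ t * (t / u) ^ ε))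
    (hR : ∀ (f : E) (t : ℝ) (δ : ℝ≥0∞), 0 < t → δ ≠ ∞ →
      (∀ u, 0 < u → u ≤ t → Kf N₀ N₁ u f ≤ δ * ENNReal.ofReal (u / t)) →
      (∀ u, t ≤ u → Kf N₀ N₁ u f ≤ δ * ENNReal.ofReal (ρ u / ρ t * (t / u) ^ ε)) →
      NR f ≤ C * δ * ENNReal.ofReal ((ρ t)⁻¹))
    (f : E) (t : ℝ) (M : ℝ≥0∞) (ht : 0 < t)
    (hM : ∀ u, t ≤ u → Kf N₀ N₁ u f ≤ M * ENNReal.ofReal (ρ u / ρ t * (t / u) ^ ε)) :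
    Kf N₀ NR (ρ t) f ≤ (1 + C * (CQ * (ENNReal.ofReal G + 1))) * M := by
  refine le_of_dense le_self_add (by finiteness) fun δ hδ hδt => ?_
  have hρt := hρ t ht
  have hKt : Kf N₀ N₁ t f < δ := by
    refine lt_of_le_of_lt ?_ hδ
    have := hM t le_rfl
    rwa [div_self hρt.ne', div_self ht.ne', Real.one_rpow, mul_one, ENNReal.ofReal_one, mul_one] at this
  obtain ⟨g, hg⟩ := iInf_lt_iff.1 hKt
  have hg0 : N₀ g ≤ δ := le_self_add.trans hg.le
  have hg1 : ENNReal.ofReal t * N₁ (f - g) ≤ δ := le_add_self.trans hg.le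
  have hdd : δ ≤ CQ * (ENNReal.ofReal G + 1) * δ :=
    le_mul_of_one_le_left' (le_trans h1 (le_mul_of_one_le_right' le_add_self))
  have hr := hR (f - g) t (CQ * (ENNReal.ofReal G + 1) * δ) ht (by finiteness) (by
    intro u hu hut
    refine (Kf_le_N1 N₀ N₁ h0 u _).trans ?_
    calc ENNReal.ofReal u * N₁ (f - g) = ENNReal.ofReal (u / t * t) * N₁ (f - g) := by
          rw [div_mul_cancel₀ _ ht.ne']
      _ = ENNReal.ofReal t * N₁ (f - g) * ENNReal.ofReal (u / t) := by
          rw [ENNReal.ofReal_mul (by positivity)]; ring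
      _ ≤ _ := mul_le_mul' (hg1.trans hdd) le_rfl) (by
    intro u hu
    have h2 := Kf_quasi N₀ N₁ h1 hCQ hq u (f - g) (-g)
    rw [hneg, show f - g - -g = f by abel] at h2
    refine h2.trans ?_
    have hu0 := ht.trans_le hu
    have hρu := hρ u hu0
    set x := ρ u / ρ t * (t / u) ^ ε with hx
    have hx0 : 0 < x := by positivity
    have hG1 : 1 ≤ ENNReal.ofReal G * ENNReal.ofReal x := by
      rw [← ENNReal.ofReal_mul' hx0.le, ENNReal.one_le_ofReal]
      exact hG t u ht hu
    calc CQ * (N₀ g + Kf N₀ N₁ u f) ≤ CQ * (1 * δ + δ * ENNReal.ofReal x) := by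
          rw [one_mul]
          gcongr
          exact (hM u hu).trans (by gcongr)
      _ ≤ CQ * (ENNReal.ofReal G * ENNReal.ofReal x * δ + δ * ENNReal.ofReal x) := by gcongr
      _ = _ := by ring)
  calc Kf N₀ NR (ρ t) f ≤ N₀ g + ENNReal.ofReal (ρ t) * NR (f - g) := iInf_le _ g
    _ ≤ δ + ENNReal.ofReal (ρ t) * (C * (CQ * (ENNReal.ofReal G + 1) * δ) * ENNReal.ofReal ((ρ t)⁻¹)) := by gcongr
    _ = δ + (ENNReal.ofReal (ρ t) * ENNReal.ofReal ((ρ t)⁻¹)) * (C * (CQ * (ENNReal.ofReal G + 1) * δ)) := by ring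
    _ = _ := by
        rw [← ENNReal.ofReal_mul hρt.le, mul_inv_cancel₀ hρt.ne', ENNReal.ofReal_one]; ring

theorem theorem21
    (A₀ A₁ : QuasiBanach E)
    (hne : ∃ x : E, x ≠ 0 ∧ A₀.N x ≠ ∞ ∧ A₁.N x ≠ ∞)
    (θ₁ θ : ℝ) (hθ₁ : 0 < θ₁) (hθ₁' : θ₁ < 1) (hθ : 0 ≤ θ) (hθ' : θ < 1)
    (q₁ r₁ r : ℝ≥0∞) (hq₁ : 0 < q₁) (hr₁ : 0 < r₁) (hr : 0 < r)
    (a a₁ b₁ : ℝ → ℝ)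
    (h_sv_a : SlowlyVarying a)
    (h_sv_a₁ : SlowlyVarying a₁)
    (h_sv_b₁ : SlowlyVarying b₁)
    (hfin : LqNorm r₁ (Ioo 0 1) (svWgt r₁ (fun s => b₁ s / a₁ s)) ≠ ∞)
    (hθ0 : θ = 0 → LqNorm r (Ioi 1) (svWgt r (fun s => a s)) ≠ ∞)
    (c₁ ρ : ℝ → ℝ)
    (hc₁ : ∀ t, c₁ t = a₁ t * (LqNorm r₁ (Ioo 0 t) (svWgt r₁ (fun s => b₁ s / a₁ s))).toReal)
    (hρ : ∀ t, ρ t = t ^ θ₁ / c₁ t) :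
    EquivNorms
      (normK A₀.N (normR A₀.N A₁.N θ₁ r₁ q₁ b₁ a₁) θ r a)
      (normK A₀.N A₁.N (θ * θ₁) r (fun t => c₁ t ^ θ * a (ρ t))) := by

  have hSa := SVB.of h_sv_a
  have hSa₁ := SVB.of h_sv_a₁
  have hSb₁ := SVB.of h_sv_b₁
  have hβ : SVB (fun s => b₁ s / a₁ s) := by
    have := hSb₁.mul hSa₁.inv
    simpa only [div_eq_mul_inv] using this
  obtain ⟨hBt, hβB, hBS⟩ := B_facts hr₁ hβ hfin
  set B : ℝ → ℝ := fun t => (LqNorm r₁ (Ioo 0 t) (svWgt r₁ (fun s => b₁ s / a₁ s))).toReal with hB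
  have hLB : ∀ t : ℝ, 0 < t → LqNorm r₁ (Ioo 0 t) (svWgt r₁ (fun s => b₁ s / a₁ s)) = ENNReal.ofReal (B t) :=
    fun t ht => (ENNReal.ofReal_toReal (hBt t ht)).symm
  have hBm : ∀ s t : ℝ, 0 < s → s ≤ t → B s ≤ B t := fun s t hs hst =>
    ENNReal.toReal_mono (hBt t (hs.trans_le hst)) (LqNorm_mono_set (Ioo_subset_Ioo_right hst) _)
  have hc : c₁ = fun t => a₁ t * B t := funext hc₁
  have hcS : SVB c₁ := by rw [hc]; exact hSa₁.mul hBS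
  have hρ' : ∀ t, ρ t = t ^ θ₁ / (a₁ t * B t) := fun t => by rw [hρ, hc]
  have hρp : ∀ t, 0 < t → 0 < ρ t := fun t ht => by
    rw [hρ]; exact div_pos (Real.rpow_pos_of_pos ht _) (hcS.1 t ht)
  obtain ⟨c₀, hc₀, hcl⟩ := hcS.lg (half_pos hθ₁)
  have hgr : ∀ s t : ℝ, 0 < s → s ≤ t → θ₁ / 2 * (Real.logb 2 t - Real.logb 2 s) - c₀ ≤ Real.logb 2 (ρ t) - Real.logb 2 (ρ s) ∧
      Real.logb 2 (ρ t) - Real.logb 2 (ρ s) ≤ 2 * θ₁ * (Real.logb 2 t - Real.logb 2 s) + c₀ := by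
    intro s t hs hst
    have ht := hs.trans_le hst
    have hL : ∀ x : ℝ, 0 < x → Real.logb 2 (ρ x) = θ₁ * Real.logb 2 x - Real.logb 2 (c₁ x) := fun x hx => by
      rw [hρ, Real.logb_div (Real.rpow_pos_of_pos hx _).ne' (hcS.1 x hx).ne', Real.logb_rpow_eq_mul_logb_of_pos hx]
    have h1 := lg_mono hs hst
    have h2 := hcl t s ht hs
    rw [abs_of_nonneg (by linarith : 0 ≤ Real.logb 2 t - Real.logb 2 s), abs_le] at h2
    have h3 : 0 ≤ θ₁ * (Real.logb 2 t - Real.logb 2 s) := mul_nonneg hθ₁.le (by linarith)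
    rw [hL t ht, hL s hs]
    constructor <;> linarith [h2.1, h2.2]
  obtain ⟨CQ, hCQ1, hCQ, hquasi⟩ := A₀.quasi
  have hε : 0 < (1 - θ) / 4 * (θ₁ / 2) := by
    have : 0 < 1 - θ := by linarith
    positivity
  obtain ⟨CU, hCU, hU⟩ := R_upper hq₁ hr₁ hθ₁' hSa₁ hβ.1 hBS.1 hBm hβB hLB hρ' hε
  obtain ⟨CL, hCL, hLo⟩ := R_lower hq₁ hr₁ hθ₁ hSa₁ hβ.1 hBS.1 hLB hρ'
  have hG : ∀ t u : ℝ, 0 < t → t ≤ u → 1 ≤ (2:ℝ) ^ c₀ * (ρ u / ρ t * (t / u) ^ ((1 - θ) / 4 * (θ₁ / 2))) := by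
    intro t u ht hu
    have hu0 := ht.trans_le hu
    have hρt := hρp t ht
    have hρu := hρp u hu0
    refine lg_le one_pos (by positivity) ?_
    rw [Real.logb_one, Real.logb_mul (by positivity) (by positivity), Real.logb_mul (by positivity) (by positivity),
      Real.logb_rpow (by norm_num) (by norm_num), Real.logb_div hρu.ne' hρt.ne',
      Real.logb_rpow_eq_mul_logb_of_pos (by positivity), Real.logb_div ht.ne' hu0.ne']
    have h1 := (hgr t u ht hu).1
    have h2 := lg_mono ht hu
    have h3 : (1 - θ) / 4 * (θ₁ / 2) ≤ θ₁ / 2 := by nlinarith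
    have h4 := mul_le_mul_of_nonneg_right h3 (sub_nonneg.2 h2)
    linarith
  obtain ⟨C, hC, hfinal⟩ := interp_final hr hθ hθ' hθ₁ hSa hρp hc₀ hgr
    (C₁ := CQ * (1 + CL)) (C₂ := 1 + CU * (CQ * (ENNReal.ofReal ((2:ℝ) ^ c₀) + 1))) (by finiteness) (by finiteness)
  have h2s : ∀ (N₀ N₁ : E → ℝ≥0∞) (f : E) (s t : ℝ), t ≤ 2 * s → Kf N₀ N₁ t f ≤ 2 * Kf N₀ N₁ s f := by
    intro N₀ N₁ f s t h
    have := Kf_scale N₀ N₁ 2 (by norm_num) h f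
    rwa [ENNReal.ofReal_ofNat] at this
  refine equiv_of hC fun f => ?_
  have hX : normK A₀.N (normR A₀.N A₁.N θ₁ r₁ q₁ b₁ a₁) θ r a f =
      LqNorm r (Ioi 0) (fun u => ENNReal.ofReal (u ^ (-(r⁻¹.toReal))) * (ENNReal.ofReal (u ^ (-θ) * a u) * Kf A₀.N (normR A₀.N A₁.N θ₁ r₁ q₁ b₁ a₁) u f)) := by
    have key : ∀ u ∈ Ioi (0:ℝ), ENNReal.ofReal (u ^ (-θ - r⁻¹.toReal) * a u) * Kf A₀.N (normR A₀.N A₁.N θ₁ r₁ q₁ b₁ a₁) u f =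
        ENNReal.ofReal (u ^ (-(r⁻¹.toReal))) * (ENNReal.ofReal (u ^ (-θ) * a u) * Kf A₀.N (normR A₀.N A₁.N θ₁ r₁ q₁ b₁ a₁) u f) := by
      intro u hu
      have hu0 : (0:ℝ) < u := hu
      rw [← mul_assoc, ← ENNReal.ofReal_mul (by positivity), sub_eq_add_neg, Real.rpow_add hu0]
      congr 2; ring
    exact le_antisymm (LqNorm_mono measurableSet_Ioi fun u hu => (key u hu).le)
      (LqNorm_mono measurableSet_Ioi fun u hu => (key u hu).ge)
  have hY : normK A₀.N A₁.N (θ * θ₁) r (fun t => c₁ t ^ θ * a (ρ t)) f =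
      LqNorm r (Ioi 0) (fun u => ENNReal.ofReal (u ^ (-(r⁻¹.toReal))) * (ENNReal.ofReal ((ρ u) ^ (-θ) * a (ρ u)) * Kf A₀.N A₁.N u f)) := by
    have key : ∀ u ∈ Ioi (0:ℝ), ENNReal.ofReal (u ^ (-(θ * θ₁) - r⁻¹.toReal) * (c₁ u ^ θ * a (ρ u))) * Kf A₀.N A₁.N u f =
        ENNReal.ofReal (u ^ (-(r⁻¹.toReal))) * (ENNReal.ofReal ((ρ u) ^ (-θ) * a (ρ u)) * Kf A₀.N A₁.N u f) := by
      intro u hu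
      have hu0 : (0:ℝ) < u := hu
      have hcu := hcS.1 u hu0
      have hru : (ρ u) ^ (-θ) = u ^ (-(θ * θ₁)) * c₁ u ^ θ := by
        rw [hρ, Real.div_rpow (by positivity) hcu.le, Real.rpow_neg hcu.le, div_inv_eq_mul, ← Real.rpow_mul hu0.le]
        congr 2; ring
      rw [← mul_assoc (ENNReal.ofReal (u ^ (-(r⁻¹.toReal)))), ← ENNReal.ofReal_mul (by positivity), sub_eq_add_neg, Real.rpow_add hu0, hru]
      congr 2; ring
    exact le_antisymm (LqNorm_mono measurableSet_Ioi fun u hu => (key u hu).le)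
      (LqNorm_mono measurableSet_Ioi fun u hu => (key u hu).ge)
  rw [hX, hY]
  refine hfinal (fun u => Kf A₀.N A₁.N u f) (fun u => Kf A₀.N (normR A₀.N A₁.N θ₁ r₁ q₁ b₁ a₁) u f)
    (fun s t h => Kf_mono _ _ h f) (fun s t h => Kf_mono _ _ h f) (fun s t h => h2s _ _ f s t h)
    (fun s t h => h2s _ _ f s t h) ?_ ?_
  · intro t ht
    exact Kf_lower A₀.N A₁.N _ hCQ1 hCQ hCL hquasi
      (fun g => hLo (fun u => Kf A₀.N A₁.N u g) t ht fun u hu => Kf_mono _ _ hu g) f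
  · intro t M ht hM
    exact Kf_upper A₀.N A₁.N _ A₀.zero (fun x => by have := A₀.smul (-1) x; simpa using this) hCQ1 hCQ hCU hquasi hρp hG
      (fun g t δ ht hδ h1 h2 => hU (fun u => Kf A₀.N A₁.N u g) t δ ht hδ h1 h2) f t M ht hM

end
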